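/- arXiv:2404.16741 — 3 statements merged into one kernel-verified Lean document; each statement's English description precedes it below -/
import Mathlib

section
/- Let (D,K,T) be an MD-SPP instance with T ≥ 2, let k := |K|, and let q := ⌈(2^k + k)(1 + k/(T−1))⌉. Suppose that |V(D)| > q and that F is a set of vertices each of which is q-enclosed with respect to (D,K,T). Then (D,K,T) is a YES-instance of MD-SPP if and only if (D,F,K,T) is a YES-instance of SMD-SPP. -/
open Relation

variable {V : Type*} [DecidableEq V]

/-- The adjacency relation of a digraph given by its edge set. -/
def Adj (E : Finset (V × V)) : V → V → Prop := fun a b => (a, b) ∈ E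

/-- `D` is a digraph: no self-loops (no parallel edges since edges form a set). -/
def IsDigraph (D : Finset (V × V)) : Prop := ∀ e ∈ D, e.1 ≠ e.2

/-- `l` is a directed `s`-`t`-path w.r.t. the adjacency relation `A`:
a nonempty duplicate-free list of vertices, consecutive ones adjacent,
starting at `s` and ending at `t`. -/
def DiPath (A : V → V → Prop) (s t : V) (l : List V) : Prop :=
  l.Chain' A ∧ l.Nodup ∧ l.head? = some s ∧ l.getLast? = some t

/-- Adjacency in the transitive closure `T(D)` of the digraph with edge set `E`:
`(u,v)` is an edge iff `u ≠ v` and `v` is reachable from `u` in `E`. -/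
def TCAdj (E : Finset (V × V)) (u v : V) : Prop :=
  u ≠ v ∧ Relation.ReflTransGen (Adj E) u v

/-- The outdegree of `v` in the digraph with edge set `H`. -/
def outDeg (H : Finset (V × V)) (v : V) : ℕ :=
  (H.filter fun e => e.1 = v).card

/-- The list of (directed) edges traversed by a list of vertices. -/
def listEdges (l : List V) : List (V × V) := l.zip l.tail

/-- The routed commodities in `K` are valid: for `(s,t,P) ∈ K`,
`P` is a directed `s`-`t`-path in `D`. -/
def ValidSPP (D : Finset (V × V)) (K : Finset (V × V × List V)) : Prop :=
  ∀ k ∈ K, DiPath (Adj D) k.1 k.2.1 k.2.2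

/-- `H` is a solution graph of the MD-SPP instance `(D,K,T)`: a subgraph of
`T(D)` of maximum outdegree at most `T` such that every routed commodity
`(s,t,P) ∈ K` has a directed `s`-`t`-path in `H ∩ T(P)`, i.e. an `s`-`t`-path
whose edges are in `H` and whose vertices lie on `P` in the same order
(a sublist of `P`). -/
def SPPSolution (D : Finset (V × V)) (K : Finset (V × V × List V)) (T : ℕ)
    (H : Finset (V × V)) : Prop :=
  (∀ e ∈ H, TCAdj D e.1 e.2) ∧ (∀ v, outDeg H v ≤ T) ∧
  (∀ k ∈ K, ∃ l, DiPath (Adj H) k.1 k.2.1 l ∧ l.Sublist k.2.2)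

/-- `H` is a solution graph of the SMD-SPP instance `(D,F,K,T)`: a subgraph of
`T(D)` such that every vertex outside the flexible set `F` has outdegree at
most `T`, and every routed commodity `(s,t,P) ∈ K` has a directed `s`-`t`-path
in `H ∩ T(P)`. -/
def SMDSolution (D : Finset (V × V)) (F : Finset V) (K : Finset (V × V × List V))
    (T : ℕ) (H : Finset (V × V)) : Prop :=
  (∀ e ∈ H, TCAdj D e.1 e.2) ∧ (∀ v, v ∉ F → outDeg H v ≤ T) ∧
  (∀ k ∈ K, ∃ l, DiPath (Adj H) k.1 k.2.1 l ∧ l.Sublist k.2.2)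

/-- The type of a vertex `v` w.r.t. the routed commodities `K`: the set of
routed commodities whose path contains `v`. -/
def vertexType (K : Finset (V × V × List V)) (v : V) : Finset (V × V × List V) :=
  K.filter fun k => v ∈ k.2.2

/-- `v` is `q`-enclosed w.r.t. the MD-SPP instance with commodities `K`:
there are a nonempty `U ⊆ K` and distinct vertices `v₁, …, v_{2q+1}`, each of
type exactly `U`, with `v_{q+1} = v`, such that every commodity in `U` visits
them in the order `(v₁, …, v_{2q+1})` or in the order `(v_{2q+1}, …, v₁)`. -/
def QEnclosed (K : Finset (V × V × List V)) (q : ℕ) (v : V) : Prop :=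
  ∃ U : Finset (V × V × List V), U ⊆ K ∧ U.Nonempty ∧
    ∃ vs : Fin (2 * q + 1) → V, Function.Injective vs ∧
      (∀ i, vertexType K (vs i) = U) ∧
      vs ⟨q, by omega⟩ = v ∧
      (∀ k ∈ U, (List.ofFn vs).Sublist k.2.2 ∨ (List.ofFn vs).reverse.Sublist k.2.2)

theorem aux_split {α : Type*} {A C X Y : List α} {e : α} (hn : (X ++ e :: Y).Nodup)
    (h : (A ++ e :: C).Sublist (X ++ e :: Y)) : A.Sublist X ∧ C.Sublist Y := by
  have hn' := List.nodup_append.1 hn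
  have heX : e ∉ X := fun h => hn'.2.2 e h e (by simp) rfl
  have heY : e ∉ Y := (List.nodup_cons.1 hn'.2.1).1
  obtain ⟨l1, l2, h1, h2, h3⟩ := List.sublist_append_iff.1 h
  rcases List.append_eq_append_iff.1 h1 with ⟨a', h4, h5⟩ | ⟨c', h4, h5⟩
  · cases a' with
    | nil =>
      simp at h4 h5
      subst h4; subst h5
      exact ⟨h2, List.cons_sublist_cons.1 h3⟩
    | cons b a' =>
      simp at h5
      exact absurd (h2.subset (by rw [h4, ← h5.1]; simp)) heX
  · cases c' with
    | nil =>
      simp at h4 h5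
      subst h4; subst h5
      exact ⟨h2, List.cons_sublist_cons.1 h3⟩
    | cons b c' =>
      subst h5
      exfalso
      cases h3 with
      | cons _ h => exact heY (h.subset (by simp))
      | cons_cons _ h => exact heY (h.subset (by simp))

theorem aux_order {α : Type*} {A C N1 W P : List α} {e x : α} (hn : P.Nodup)
    (h : (N1 ++ W).Sublist P) (he : e ∈ W) (hx : x ∈ N1) (hl : (A ++ e :: C).Sublist P)
    (hxl : x ∈ A ++ e :: C) (hA : x ∉ A) : False := by
  have heP : e ∈ P := hl.subset (by simp)
  obtain ⟨X, Y, rfl⟩ := List.append_of_mem heP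
  obtain ⟨w1, w2, rfl⟩ := List.append_of_mem he
  rw [← List.append_assoc] at h
  have h1 := (aux_split hn h).1.subset (List.mem_append_left _ hx)
  have h2 := (aux_split hn hl).2
  have hn' := List.nodup_append.1 hn
  rcases List.mem_append.1 hxl with h3 | h3
  · exact hA h3
  · rcases List.mem_cons.1 h3 with rfl | h3
    · exact hn'.2.2 x h1 x (by simp) rfl
    · exact hn'.2.2 x h1 x (by simp [h2.subset h3]) rfl

theorem aux_shrink {α κ : Type*} (U : Finset κ) (l P : κ → List α)
    (hlP : ∀ p ∈ U, (l p).Sublist (P p)) (hP : ∀ p ∈ U, (P p).Nodup) (m : ℕ) (v : α) :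
    ∀ (n : ℕ) (X Y B : List α) (S : Finset κ), B = X ++ v :: Y → (n + 1) * m ≤ X.length →
      (n + 1) * m ≤ Y.length → S.card ≤ n → S ⊆ U →
      (∀ p ∈ U, ∀ x ∈ B, x ∈ l p → p ∈ S) →
      ∃ Wl M Wr : List α, Wl.length = m ∧ Wr.length = m ∧ v ∈ M ∧
        (Wl ++ M ++ Wr).Sublist B ∧
        ∀ p ∈ U, ∀ A e C, l p = A ++ e :: C → (∀ a ∈ A, a ∉ Wl ++ M ++ Wr) →
          ((Wl ++ M ++ Wr).Sublist (P p) → e ∉ Wr) ∧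
          ((Wl ++ M ++ Wr).reverse.Sublist (P p) → e ∉ Wl) := by
  classical
  intro n
  induction n with
  | zero =>
    intro X Y B S hB hX hY hS hSU hvis
    have hS0 : S = ∅ := by simpa using hS
    subst hS0
    simp at hX hY
    have hb : X.take m ++ (X.drop m ++ v :: Y.take (Y.length - m)) ++ Y.drop (Y.length - m) = B := by
      rw [← List.append_assoc, List.take_append_drop, List.append_assoc, List.cons_append,
        List.take_append_drop, hB]
    refine ⟨X.take m, X.drop m ++ v :: Y.take (Y.length - m), Y.drop (Y.length - m), ?_, ?_, ?_, ?_, ?_⟩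
    · simp [hX]
    · simp; omega
    · simp
    · rw [hb]
    · intro p hp A e C hl hA
      rw [hb]
      have : e ∉ B := fun he => by simpa using hvis p hp e he (by simp [hl])
      constructor
      · intro _ h
        exact this (by rw [← hb]; exact List.mem_append_right _ h)
      · intro _ h
        exact this (by rw [← hb]; simp [h])
  | succ n ih =>
    intro X Y B S hB hX hY hS hSU hvis
    have e1 : (n + 1 + 1) * m = (n + 1) * m + m := by ring
    have e2 : (n + 1) * m = n * m + m := by ring
    have hb : X.take m ++ (X.drop m ++ v :: Y.take (Y.length - m)) ++ Y.drop (Y.length - m) = B := by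
      rw [← List.append_assoc, List.take_append_drop, List.append_assoc, List.cons_append,
        List.take_append_drop, hB]
    by_cases hgood : ∀ p ∈ U, ∀ A e C, l p = A ++ e :: C → (∀ a ∈ A, a ∉ B) →
          (B.Sublist (P p) → e ∉ Y.drop (Y.length - m)) ∧
          (B.reverse.Sublist (P p) → e ∉ X.take m)
    · refine ⟨X.take m, X.drop m ++ v :: Y.take (Y.length - m), Y.drop (Y.length - m),
        ?_, ?_, ?_, ?_, ?_⟩
      · simp; omega
      · simp; omega
      · simp
      · rw [hb]
      · rw [hb]; exact hgood
    · push Not at hgood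
      obtain ⟨p, hp, A, e, C, hl, hA, hbad⟩ := hgood
      have key : ∀ X' Y' : List α, (n + 1) * m ≤ X'.length → (n + 1) * m ≤ Y'.length →
          (X' ++ v :: Y').Sublist B → e ∈ B → (∀ x ∈ X' ++ v :: Y', x ∉ l p) →
          ∃ Wl M Wr : List α, Wl.length = m ∧ Wr.length = m ∧ v ∈ M ∧
          (Wl ++ M ++ Wr).Sublist B ∧
          ∀ p ∈ U, ∀ A e C, l p = A ++ e :: C → (∀ a ∈ A, a ∉ Wl ++ M ++ Wr) →
            ((Wl ++ M ++ Wr).Sublist (P p) → e ∉ Wr) ∧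
            ((Wl ++ M ++ Wr).reverse.Sublist (P p) → e ∉ Wl) := by
        intro X' Y' hX' hY' hsub heB hno
        have hpS : p ∈ S := hvis p hp e heB (by simp [hl])
        obtain ⟨Wl, M, Wr, h1, h2, h3, h4, h5⟩ := ih X' Y' _ (S.erase p) rfl hX' hY'
          (by rw [Finset.card_erase_of_mem hpS]; omega)
          ((Finset.erase_subset _ _).trans hSU)
          (by
            intro p' hp' x hx hxl
            rw [Finset.mem_erase]
            refine ⟨?_, hvis p' hp' x (hsub.subset hx) hxl⟩
            rintro rfl
            exact hno x hx hxl)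
        exact ⟨Wl, M, Wr, h1, h2, h3, h4.trans hsub, h5⟩
      have hlp := hlP p hp
      rw [hl] at hlp
      by_cases h1 : B.Sublist (P p) ∧ e ∈ Y.drop (Y.length - m)
      · have hb' : (X ++ v :: Y.take (Y.length - m)) ++ Y.drop (Y.length - m) = B := by
          rw [List.append_assoc, List.cons_append, List.take_append_drop, hB]
        have hs : (X ++ v :: Y.take (Y.length - m)).Sublist B := by
          conv_rhs => rw [← hb']
          exact List.sublist_append_left _ _
        refine key X (Y.take (Y.length - m)) (by omega) (by simp; omega) hs
          (by rw [← hb']; exact List.mem_append_right _ h1.2) ?_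
        intro x hx hxl
        have h11 := h1.1
        rw [← hb'] at h11
        rw [hl] at hxl
        exact aux_order (hP p hp) h11 h1.2 hx hlp hxl (fun h => hA x h (hs.subset hx))
      · have h2 : B.reverse.Sublist (P p) ∧ e ∈ X.take m := by tauto
        have hb' : X.take m ++ (X.drop m ++ v :: Y) = B := by
          rw [← List.append_assoc, List.take_append_drop, hB]
        have hs : (X.drop m ++ v :: Y).Sublist B := by
          conv_rhs => rw [← hb']
          exact List.sublist_append_right _ _
        refine key (X.drop m) Y (by simp; omega) (by omega) hs
          (by rw [← hb']; simp [h2.2]) ?_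
        intro x hx hxl
        have h11 := h2.1
        rw [← hb', List.reverse_append] at h11
        rw [hl] at hxl
        exact aux_order (hP p hp) h11 (List.mem_reverse.2 h2.2) (List.mem_reverse.2 hx) hlp hxl
          (fun h => hA x h (hs.subset hx))

theorem aux_chain_and {α : Type*} {R S : α → α → Prop} {l : List α} (h1 : l.IsChain R)
    (h2 : l.IsChain S) : l.IsChain (fun a b => R a b ∧ S a b) := by
  rw [List.isChain_iff_getElem] at *
  exact fun i hi => ⟨h1 i hi, h2 i hi⟩

theorem aux_tc {D : Finset (V × V)} {s t : V} {P l : List V} (hP : DiPath (Adj D) s t P)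
    (hl : l.Sublist P) : l.IsChain (TCAdj D) := by
  have h1 : P.IsChain (ReflTransGen (Adj D)) :=
    List.IsChain.imp (fun a b h => ReflTransGen.single h) hP.1
  have h2 : P.Pairwise (ReflTransGen (Adj D)) := h1.pairwise
  have h3 : P.Pairwise (TCAdj D) := List.Pairwise.and hP.2.1 h2
  exact (h3.sublist hl).isChain

/-- successor of `x` in the list -/
def auxNext (G : List V) (x : V) : V := G.getD (G.idxOf x + 1) x

theorem aux_next {G : List V} (hG : G.Nodup) : G.IsChain (fun a b => b = auxNext G a) := by
  rw [List.isChain_iff_getElem]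
  intro i hi
  simp [auxNext, hG.idxOf_getElem, hi]

/-- The new path. -/
theorem aux_path {R Q : V → V → Prop} {s t e : V} {P A C G : List V} {r : ℕ}
    (hn : P.Nodup) (ht : P.getLast? = some t)
    (hl : DiPath Q s t (A ++ e :: C)) (hlP : (A ++ e :: C).Sublist P)
    (hG : (e :: G).Sublist P) (hr : r + 1 < G.length)
    (hAR : ∀ a ∈ A, ∀ b, Q a b → R a b)
    (heR : R e (G[0]'(by omega))) (hGR : G.IsChain R) (htR : R (G[r]'(by omega)) t) :
    ∃ l', DiPath R s t l' ∧ l'.Sublist P := by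
  have heP : e ∈ P := hlP.subset (by simp)
  obtain ⟨X, Y, rfl⟩ := List.append_of_mem heP
  have h1 := (aux_split hn hlP).1
  have h2 := (aux_split (A := []) hn hG).2
  have hY : Y ≠ [] := by
    rintro rfl
    have := h2.length_le
    simp at this; subst this; simp at hr
  have hsub : (G.take (r + 1) ++ [t]).Sublist Y := by
    have hYt : Y = Y.dropLast ++ [t] := by
      have : Y.getLast hY = t := by
        rw [List.getLast?_append, List.getLast?_cons_of_ne_nil hY,
          List.getLast?_eq_some_getLast hY] at ht
        simpa using ht
      rw [← this, List.dropLast_append_getLast hY]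
    rw [hYt]
    refine List.Sublist.append ?_ (List.Sublist.refl _)
    have h3 : G.dropLast.Sublist Y.dropLast := by
      rw [List.dropLast_eq_take, List.dropLast_eq_take]
      have h4 : G.dropLast ++ [G.getLast (by rintro rfl; simp at hr)] = G :=
        List.dropLast_append_getLast _
      rw [hYt, ← h4] at h2
      have h5 := h2.reverse
      simp only [List.reverse_append, List.reverse_singleton, List.singleton_append] at h5
      have h6 := (List.Sublist.tail h5).reverse
      simpa [List.dropLast_eq_take] using h6
    refine List.Sublist.trans ?_ h3
    rw [List.dropLast_eq_take]
    exact (List.take_prefix_take_left (by omega)).sublist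
  have hsubP : (A ++ e :: (G.take (r + 1) ++ [t])).Sublist (X ++ e :: Y) :=
    List.Sublist.append h1 (List.cons_sublist_cons.2 hsub)
  refine ⟨_, ⟨?_, hn.sublist hsubP, ?_, ?_⟩, hsubP⟩
  · change List.IsChain _ _
    rw [List.isChain_split]
    constructor
    · have := (List.isChain_split.1 hl.1).1
      rw [List.isChain_iff_getElem] at this ⊢
      intro i hi
      refine hAR _ ?_ _ (this i hi)
      simp at hi
      rw [List.getElem_append_left hi]
      simp
    · rw [List.isChain_cons]
      constructor
      · intro y hy
        obtain ⟨g, G', rfl⟩ := List.exists_cons_of_length_pos (l := G) (by omega)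
        simp at hy heR
        exact hy ▸ heR
      · rw [List.isChain_append]
        refine ⟨hGR.take _, by simp, ?_⟩
        intro x hx y hy
        simp at hy
        subst hy
        rw [List.getLast?_take] at hx
        simp [List.getElem?_eq_getElem (show r < G.length by omega)] at hx
        subst hx
        exact htR
  · have := hl.2.2.1
    cases A <;> simpa using this
  · simp [List.getLast?_append]
    rw [List.getLast?_cons_of_ne_nil (by simp)]
    simp

theorem aux_free (W : List V) (hW : W.Nodup) (Es : Finset (Option V)) (k : ℕ)
    (hE : Es.card ≤ k) (hl : W.length = 2 * k + 1) :
    k + 1 ≤ (W.filter (fun x => decide (some x ∉ Es))).length := by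
  have h1 := List.length_eq_length_filter_add (l := W) (fun x => decide (some x ∉ Es))
  have h2 : (W.filter (fun x => !decide (some x ∉ Es))).length ≤ Es.card := by
    rw [← List.toFinset_card_of_nodup (hW.filter _)]
    refine Finset.card_le_card_of_injOn some ?_ (by intro a _ b _ h; simpa using h)
    intro x hx
    simp at hx
    simpa using hx.2
  omega

theorem aux_index (K : Finset (V × V × List V)) : ∃ (r : V × V × List V → ℕ) (τ : ℕ → V → V),
    ∀ p ∈ K, r p < K.card ∧ ∀ x, τ (r p) x = p.2.1 := by
  refine ⟨fun p => K.toList.idxOf p, fun i x => ((K.toList[i]?).map (fun p => p.2.1)).getD x, ?_⟩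
  intro p hp
  have : K.toList.idxOf p < K.toList.length := List.idxOf_lt_length_iff.2 (by simpa using hp)
  refine ⟨by simpa using this, ?_⟩
  intro x
  simp [List.getElem?_eq_getElem this]

theorem aux_step [Fintype V] (D : Finset (V × V)) (K : Finset (V × V × List V)) (T : ℕ)
    (F : Finset V) (hKvalid : ValidSPP D K) (hT : 2 ≤ T) (q : ℕ)
    (hq : (K.card + 1) * (2 * K.card + 1) ≤ q) (v : V) (hv : QEnclosed K q v)
    (H : Finset (V × V)) (hH : SMDSolution D (insert v F) K T H) :
    ∃ H', SMDSolution D F K T H' := by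
  classical
  obtain ⟨U, hUK, -, vs, hinj, htype, hmid, hord⟩ := hv
  have hl' : ∀ p, ∃ l, p ∈ K → DiPath (Adj H) p.1 p.2.1 l ∧ l.Sublist p.2.2 := by
    intro p
    by_cases hp : p ∈ K
    · obtain ⟨l, hl⟩ := hH.2.2 p hp
      exact ⟨l, fun _ => hl⟩
    · exact ⟨[], fun h => absurd h hp⟩
  choose l hl using hl'
  obtain ⟨L, hL⟩ : ∃ L, L = List.ofFn vs := ⟨_, rfl⟩
  have hLlen : L.length = 2 * q + 1 := by simp [hL]
  have hLnd : L.Nodup := by rw [hL]; exact List.nodup_ofFn.2 hinj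
  have hLtype : ∀ x ∈ L, vertexType K x = U := by
    intro x hx
    rw [hL, List.mem_ofFn] at hx
    obtain ⟨i, rfl⟩ := hx
    exact htype i
  have hLsplit : L = L.take q ++ v :: L.drop (q + 1) := by
    have h1 : L[q]'(by omega) = v := by
      simp only [hL, List.getElem_ofFn]; exact hmid
    conv_lhs => rw [← List.take_append_drop q L, List.drop_eq_getElem_cons (by omega), h1]
  rw [← hL] at hord
  have hUc : U.card ≤ K.card := Finset.card_le_card hUK
  obtain ⟨Wl, M, Wr, hWl, hWr, hvM, hNL, hgood⟩ := aux_shrink U l (fun p => p.2.2)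
    (fun p hp => (hl p (hUK hp)).2) (fun p hp => (hKvalid p (hUK hp)).2.1) (2 * K.card + 1) v
    K.card (L.take q) (L.drop (q + 1)) L U hLsplit (by simp; omega) (by simp; omega) hUc
    (Finset.Subset.refl _) (fun p hp _ _ _ => hp)
  obtain ⟨N, hN⟩ : ∃ N, N = Wl ++ M ++ Wr := ⟨_, rfl⟩
  rw [← hN] at hNL hgood
  have hNnd : N.Nodup := hLnd.sublist hNL
  have hNnd' := hNnd
  rw [hN, List.append_assoc] at hNnd'
  obtain ⟨hWlnd, hMWr, hdis1⟩ := List.nodup_append.1 hNnd'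
  obtain ⟨hMnd, hWrnd, hdis2⟩ := List.nodup_append.1 hMWr
  obtain ⟨ent, hent⟩ : ∃ ent : V × V × List V → Option V,
    ent = fun p => (l p).find? (fun x => decide (x ∈ N)) := ⟨_, rfl⟩
  obtain ⟨Es, hEs⟩ : ∃ Es, Es = U.image ent := ⟨_, rfl⟩
  have hEc : Es.card ≤ K.card := by rw [hEs]; exact Finset.card_image_le.trans hUc
  obtain ⟨Gp, hGp⟩ : ∃ G, G = Wr.filter (fun x => decide (some x ∉ Es)) := ⟨_, rfl⟩
  obtain ⟨Gm, hGm⟩ : ∃ G, G = Wl.reverse.filter (fun x => decide (some x ∉ Es)) := ⟨_, rfl⟩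
  have hGpl : K.card + 1 ≤ Gp.length := by
    rw [hGp]; exact aux_free Wr hWrnd Es _ hEc hWr
  have hGml : K.card + 1 ≤ Gm.length := by
    rw [hGm]; exact aux_free _ (List.nodup_reverse.2 hWlnd) Es _ hEc (by simpa using hWl)
  have hGpnd : Gp.Nodup := by rw [hGp]; exact hWrnd.filter _
  have hGmnd : Gm.Nodup := by rw [hGm]; exact (List.nodup_reverse.2 hWlnd).filter _
  have hGpN : ∀ x ∈ Gp, x ∈ N := by
    intro x hx
    rw [hGp, List.mem_filter] at hx
    rw [hN]; simp [hx.1]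
  have hGmN : ∀ x ∈ Gm, x ∈ N := by
    intro x hx
    rw [hGm, List.mem_filter] at hx
    rw [hN]; simp [List.mem_reverse.1 hx.1]
  have hGpm : ∀ x ∈ Gm, x ∉ Gp := by
    intro x hx hx'
    rw [hGm, List.mem_filter] at hx
    rw [hGp, List.mem_filter] at hx'
    exact hdis1 x (List.mem_reverse.1 hx.1) x (by simp [hx'.1]) rfl
  have hGpE : ∀ x ∈ Gp, some x ∉ Es := by
    intro x hx
    rw [hGp, List.mem_filter] at hx
    simpa using hx.2
  have hGmE : ∀ x ∈ Gm, some x ∉ Es := by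
    intro x hx
    rw [hGm, List.mem_filter] at hx
    simpa using hx.2
  obtain ⟨r, τ, hrτ⟩ := aux_index K
  obtain ⟨out, hout⟩ : ∃ out : V → Finset V, out = fun x =>
      if x ∈ Gp then {auxNext Gp x, τ (Gp.idxOf x) x}
      else if x ∈ Gm then {auxNext Gm x, τ (Gm.idxOf x) x}
      else {Gp[0]'(by omega), Gm[0]'(by omega)} := ⟨_, rfl⟩
  have houtc : ∀ x, (out x).card ≤ 2 := by
    intro x
    simp only [hout]
    split_ifs <;> exact Finset.card_le_two
  let H' : Finset (V × V) := Finset.univ.filter (fun e => TCAdj D e.1 e.2 ∧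
    ((e.1 ∉ N ∧ e ∈ H) ∨ (e.1 ∈ N ∧ e.2 ∈ out e.1)))
  have hAdj : ∀ a b, Adj H' a b ↔ TCAdj D a b ∧
      ((a ∉ N ∧ Adj H a b) ∨ (a ∈ N ∧ b ∈ out a)) := by
    intro a b
    simp [Adj, H']
  have hfin : ∀ p ∈ K, (∃ l', DiPath (fun a b => (a ∉ N ∧ Adj H a b) ∨ (a ∈ N ∧ b ∈ out a))
      p.1 p.2.1 l' ∧ l'.Sublist p.2.2) := by
    intro p hp
    obtain ⟨hl1, hl2⟩ := hl p hp
    cases hep : ent p with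
    | none =>
      rw [hent] at hep
      simp only [List.find?_eq_none, decide_eq_true_eq] at hep
      refine ⟨l p, ⟨?_, hl1.2⟩, hl2⟩
      have := hl1.1
      change List.IsChain _ _ at this
      change List.IsChain _ _
      rw [List.isChain_iff_getElem] at this ⊢
      exact fun i hi => Or.inl ⟨hep _ (by simp), this i hi⟩
    | some e =>
      have hep' := hep
      rw [hent] at hep'
      simp only [List.find?_eq_some_iff_append, decide_eq_true_eq] at hep'
      obtain ⟨heN, A, C, hAC, hA⟩ := hep'
      have hA' : ∀ a ∈ A, a ∉ N := by
        intro a ha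
        simpa using hA a ha
      have hpU : p ∈ U := by
        rw [← hLtype e (hNL.subset heN), vertexType, Finset.mem_filter]
        exact ⟨hp, hl2.subset (by simp [hAC])⟩
      have heE : some e ∈ Es := by
        rw [hEs, ← hep]; exact Finset.mem_image_of_mem _ hpU
      have hg := hgood p hpU A e C hAC hA'
      rw [hAC] at hl1 hl2
      obtain ⟨hr1, hr2⟩ := hrτ p hp
      have hePp : e ∉ Gp := fun h => hGpE e h heE
      have hePm : e ∉ Gm := fun h => hGmE e h heE
      have hD := hKvalid p hp
      rcases hord p hpU with ho | ho
      · have hNP : N.Sublist p.2.2 := hNL.trans ho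
        have heW := hg.1 hNP
        refine aux_path (G := Gp) (r := r p) hD.2.1 hD.2.2.2 hl1 hl2 ?_ (by omega) ?_ ?_ ?_ ?_
        · have heM : e ∈ Wl ++ M := by
            rw [hN] at heN
            exact (List.mem_append.1 heN).resolve_right heW
          refine List.Sublist.trans ?_ hNP
          rw [hN]
          refine List.Sublist.append (l₁ := [e]) (List.singleton_sublist.2 heM) ?_
          rw [hGp]; exact List.filter_sublist
        · exact fun a ha b hab => Or.inl ⟨hA' a ha, hab⟩
        · refine Or.inr ⟨heN, ?_⟩
          simp [hout, hePp, hePm]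
        · have := aux_next hGpnd
          rw [List.isChain_iff_getElem] at this ⊢
          intro i hi
          refine Or.inr ⟨hGpN _ (by simp), ?_⟩
          have h1 := this i hi
          simp only [hout]
          rw [if_pos (by simp), h1]
          simp
        · refine Or.inr ⟨hGpN _ (by simp), ?_⟩
          simp only [hout]
          rw [if_pos (by simp), hGpnd.idxOf_getElem, hr2]
          simp
      · have hNP : N.reverse.Sublist p.2.2 := hNL.reverse.trans ho
        have heW := hg.2 hNP
        refine aux_path (G := Gm) (r := r p) hD.2.1 hD.2.2.2 hl1 hl2 ?_ (by omega) ?_ ?_ ?_ ?_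
        · have heM : e ∈ (M ++ Wr).reverse := by
            rw [hN, List.append_assoc] at heN
            exact List.mem_reverse.2 ((List.mem_append.1 heN).resolve_left heW)
          refine List.Sublist.trans ?_ hNP
          rw [hN, List.append_assoc, List.reverse_append]
          refine List.Sublist.append (l₁ := [e]) (List.singleton_sublist.2 heM) ?_
          rw [hGm]; exact List.filter_sublist
        · exact fun a ha b hab => Or.inl ⟨hA' a ha, hab⟩
        · refine Or.inr ⟨heN, ?_⟩
          simp [hout, hePp, hePm]
        · have := aux_next hGmnd
          rw [List.isChain_iff_getElem] at this ⊢
          intro i hi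
          refine Or.inr ⟨hGmN _ (by simp), ?_⟩
          have h1 := this i hi
          simp only [hout]
          rw [if_neg (hGpm _ (by simp)), if_pos (by simp), h1]
          simp
        · refine Or.inr ⟨hGmN _ (by simp), ?_⟩
          simp only [hout]
          rw [if_neg (hGpm _ (by simp)), if_pos (by simp), hGmnd.idxOf_getElem, hr2]
          simp
  refine ⟨H', ?_, ?_, ?_⟩
  · intro e he
    exact (Finset.mem_filter.1 he).2.1
  · intro x hx
    by_cases hxN : x ∈ N
    · refine le_trans ?_ ((houtc x).trans hT)
      unfold outDeg
      refine Finset.card_le_card_of_injOn (fun e => e.2) ?_ ?_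
      · intro e he
        simp [H'] at he
        obtain ⟨⟨-, h⟩, rfl⟩ := he
        simp [hxN] at h
        exact h
      · rintro ⟨a, b⟩ he ⟨a', b'⟩ he' h
        simp at he he' h
        rw [he.2, he'.2, h]
    · have hxv : x ≠ v := by
        rintro rfl
        exact hxN (by rw [hN]; simp [hvM])
      refine le_trans ?_ (hH.2.1 x (by simp [hxv, hx]))
      unfold outDeg
      refine Finset.card_le_card ?_
      intro e he
      simp [H'] at he
      obtain ⟨⟨-, h⟩, rfl⟩ := he
      simp [hxN] at h
      simp [h]
  · intro p hp
    obtain ⟨l', h1, h2⟩ := hfin p hp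
    refine ⟨l', ⟨?_, h1.2⟩, h2⟩
    exact List.IsChain.imp (fun a b h => (hAdj a b).2 h)
      (aux_chain_and (aux_tc (hKvalid p hp) h2) h1.1)

theorem aux_small [Fintype V] (D : Finset (V × V)) (K : Finset (V × V × List V)) (T : ℕ)
    (F : Finset V) (hKvalid : ValidSPP D K) (hT : K.card ≤ T)
    (H : Finset (V × V)) (hH : SMDSolution D F K T H) :
    ∃ H', SMDSolution D ∅ K T H' := by
  classical
  have hl' : ∀ p, ∃ l, p ∈ K → DiPath (Adj H) p.1 p.2.1 l ∧ l.Sublist p.2.2 := by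
    intro p
    by_cases hp : p ∈ K
    · obtain ⟨l, hl⟩ := hH.2.2 p hp
      exact ⟨l, fun _ => hl⟩
    · exact ⟨[], fun h => absurd h hp⟩
  choose l hl using hl'
  let H' : Finset (V × V) := Finset.univ.filter (fun e => TCAdj D e.1 e.2 ∧
    e.2 ∈ K.image (fun p => auxNext (l p) e.1))
  refine ⟨H', ?_, ?_, ?_⟩
  · intro e he
    exact (Finset.mem_filter.1 he).2.1
  · intro x _
    refine le_trans ?_ hT
    refine le_trans ?_ (Finset.card_image_le (s := K) (f := fun p => auxNext (l p) x))
    unfold outDeg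
    refine Finset.card_le_card_of_injOn (fun e => e.2) ?_ ?_
    · intro e he
      simp [H'] at he
      obtain ⟨⟨-, h⟩, rfl⟩ := he
      simpa using h
    · rintro ⟨a, b⟩ he ⟨a', b'⟩ he' h
      simp at he he' h
      rw [he.2, he'.2, h]
  · intro p hp
    obtain ⟨h1, h2⟩ := hl p hp
    refine ⟨l p, ⟨?_, h1.2⟩, h2⟩
    refine List.IsChain.imp ?_ (aux_chain_and (aux_tc (hKvalid p hp) h2) (aux_next h1.2.1))
    rintro a b ⟨h3, h4⟩
    simp only [Adj, H', Finset.mem_filter, Finset.mem_univ, true_and, Finset.mem_image]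
    exact ⟨h3, p, hp, h4.symm⟩

theorem aux_bound (k T q : ℕ) (hT : 2 ≤ T) (hk : T < k)
    (hq : q = ⌈((2 ^ k + k : ℕ) : ℝ) * (1 + (k : ℝ) / ((T : ℝ) - 1))⌉₊) :
    (k + 1) * (2 * k + 1) ≤ q := by
  have h1 : ((2 ^ k + k : ℕ) : ℝ) * (1 + (k : ℝ) / ((T : ℝ) - 1)) ≤ q := by
    rw [hq]; exact Nat.le_ceil _
  have hT' : (2 : ℝ) ≤ T := by exact_mod_cast hT
  have hk' : (T : ℝ) + 1 ≤ k := by exact_mod_cast hk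
  have hx : (k : ℝ) / ((k : ℝ) - 2) ≤ (k : ℝ) / ((T : ℝ) - 1) :=
    div_le_div_of_nonneg_left (by linarith) (by linarith) (by linarith)
  have h2 : ((2 ^ k + k : ℕ) : ℝ) * (1 + (k : ℝ) / ((k : ℝ) - 2)) ≤ q := by
    refine le_trans ?_ h1
    gcongr
  have h3 : (((k + 1) * (2 * k + 1) : ℕ) : ℝ) ≤
      ((2 ^ k + k : ℕ) : ℝ) * (1 + (k : ℝ) / ((k : ℝ) - 2)) := by
    have hk3 : 3 ≤ k := by omega
    by_cases h5 : 5 ≤ k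
    · have hpow : ∀ n, 5 ≤ n → 2 * n ^ 2 + n + 1 ≤ 2 * 2 ^ n := by
        intro n hn
        induction n, hn using Nat.le_induction with
        | base => norm_num
        | succ n hn ih => rw [pow_succ 2 n]; nlinarith
      have h6 : (k + 1) * (2 * k + 1) ≤ (2 ^ k + k) * 2 := by nlinarith [hpow k h5]
      have h7 : (((k + 1) * (2 * k + 1) : ℕ) : ℝ) ≤ ((2 ^ k + k : ℕ) : ℝ) * 2 := by
        exact_mod_cast h6
      refine h7.trans ?_
      have : (1 : ℝ) ≤ (k : ℝ) / ((k : ℝ) - 2) := by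
        rw [le_div_iff₀ (by linarith)]; linarith
      gcongr
      linarith
    · have : k = 3 ∨ k = 4 := by omega
      rcases this with rfl | rfl <;> norm_num
  exact_mod_cast h3.trans h2

/-- Let `(D,K,T)` be an MD-SPP instance with `T ≥ 2`,
`k := |K|`, and `q := ⌈(2^k + k)(1 + k/(T−1))⌉`. If `|V(D)| > q` and every
vertex of `F` is `q`-enclosed w.r.t. `(D,K,T)`, then `(D,K,T)` is a
YES-instance of MD-SPP iff `(D,F,K,T)` is a YES-instance of SMD-SPP. -/
theorem mdspp_iff_smdspp_enclosed {V : Type*} [Fintype V] [DecidableEq V]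
    (D : Finset (V × V)) (K : Finset (V × V × List V)) (T : ℕ) (F : Finset V)
    (hD : IsDigraph D) (hKvalid : ValidSPP D K) (hT : 2 ≤ T)
    (q : ℕ)
    (hq : q = ⌈((2 ^ K.card + K.card : ℕ) : ℝ) * (1 + (K.card : ℝ) / ((T : ℝ) - 1))⌉₊)
    (hV : q < Fintype.card V)
    (hF : ∀ v ∈ F, QEnclosed K q v) :
    (∃ H : Finset (V × V), SPPSolution D K T H) ↔
      (∃ H : Finset (V × V), SMDSolution D F K T H) := by
  constructor
  · rintro ⟨H, h1, h2, h3⟩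
    exact ⟨H, h1, fun v _ => h2 v, h3⟩
  · rintro ⟨H, hH⟩
    suffices h : ∃ H', SMDSolution D ∅ K T H' by
      obtain ⟨H', h1, h2, h3⟩ := h
      exact ⟨H', h1, fun v => h2 v (by simp), h3⟩
    by_cases hk : K.card ≤ T
    · exact aux_small D K T F hKvalid hk H hH
    · have hb := aux_bound K.card T q hT (by omega) hq
      clear hq hV
      induction F using Finset.induction_on generalizing H with
      | empty => exact ⟨H, hH⟩
      | insert v F _ ih =>
        obtain ⟨H1, hH1⟩ := aux_step D K T F hKvalid hT q hb v (hF v (by simp)) H hH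
        exact ih (fun x hx => hF x (by simp [hx])) H1 hH1
end

section
/- Let m, B ∈ ℕ and let n_1, …, n_{3m} be pairwise distinct positive integers with Σ_{i=1}^{3m} n_i = mB and B/4 < n_i < B/2 for all i ∈ [3m], and let (D,K) be the digraph and commodity set constructed from these data as described. Then the integers n_1, …, n_{3m} can be partitioned into m triples each summing to B if and only if (D,K,2) is a YES-instance of MD-RSPP. -/
open Relation

variable {V : Type*} [DecidableEq V]

/-- `H` is a solution graph of the MD-RSPP instance `(D,K,T)`: a subgraph of
`T(D)` of maximum outdegree at most `T` containing a directed `s`-`t`-path for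
every commodity `(s,t) ∈ K`. -/
def RSPPSolution (D K : Finset (V × V)) (T : ℕ) (H : Finset (V × V)) : Prop :=
  (∀ e ∈ H, TCAdj D e.1 e.2) ∧ (∀ v, outDeg H v ≤ T) ∧
  (∀ k ∈ K, ∃ l, DiPath (Adj H) k.1 k.2 l)

/-- The vertices of the digraph constructed from a 3-Partition instance with
`m` triples, bound `B` and integers `n : Fin (3*m) → ℕ`: the vertices
`s_i, s'_i` (`i ∈ [m]`), `w_i^j` (`i ∈ [3m]`, `j ∈ [n_i]`, 0-indexed),
`w̃_i` (`i ∈ [3m]`), and `r_i^j, r̃_i^j, r̄_i^j` (`i ∈ [m]`, `j ∈ [B]`,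
0-indexed). (Vertices `w i j` with `j ≥ n i` and `r/rt/rb i j` with `j ≥ B`
are unused: they are isolated and occur in no commodity.) -/
inductive Vtx (m : ℕ) : Type
  | s (i : Fin m)
  | s' (i : Fin m)
  | w (i : Fin (3 * m)) (j : ℕ)
  | wt (i : Fin (3 * m))
  | r (i : Fin m) (j : ℕ)
  | rt (i : Fin m) (j : ℕ)
  | rb (i : Fin m) (j : ℕ)
  deriving DecidableEq

/-- The main directed path of the construction:
`s_1, s'_1, …, s_m, s'_m`, then `w_1^1, …, w_1^{n_1}, …, w_{3m}^1, …,
w_{3m}^{n_{3m}}`, then `r_1^1, …, r_1^B, …, r_m^1, …, r_m^B` (0-indexed). -/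
def mainPath (m B : ℕ) (n : Fin (3 * m) → ℕ) : List (Vtx m) :=
  ((List.finRange m).flatMap fun i => [Vtx.s i, Vtx.s' i]) ++
  ((List.finRange (3 * m)).flatMap fun i =>
    (List.range (n i)).map fun j => Vtx.w i j) ++
  ((List.finRange m).flatMap fun i =>
    (List.range B).map fun j => Vtx.r i j)

/-- The edge set of the constructed digraph `D`: the main path, the edges
`(w_i^{n_i}, w̃_i)`, and the edges `(r_i^j, r̃_i^j)` and `(r_i^j, r̄_i^j)`. -/
def hardD (m B : ℕ) (n : Fin (3 * m) → ℕ) : Finset (Vtx m × Vtx m) :=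
  (listEdges (mainPath m B n)).toFinset ∪
  ((List.finRange (3 * m)).map fun i => (Vtx.w i (n i - 1), Vtx.wt i)).toFinset ∪
  ((List.finRange m).flatMap fun i => (List.range B).flatMap fun j =>
    [(Vtx.r i j, Vtx.rt i j), (Vtx.r i j, Vtx.rb i j)]).toFinset

/-- The commodity (source, destination) pairs of the construction:
`(s_i, s'_i)` and `(s_i, r_i^j)` for `i ∈ [m]`, `j ∈ [B]`;
`(w_i^j, w_i^{j+1})` for `i ∈ [3m]`, `j ∈ [n_i − 1]`; `(w_i^{n_i}, w̃_i)` for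
`i ∈ [3m]`; and `(r_i^j, r̃_i^j)`, `(r_i^j, r̄_i^j)` for `i ∈ [m]`, `j ∈ [B]`. -/
def hardK (m B : ℕ) (n : Fin (3 * m) → ℕ) : Finset (Vtx m × Vtx m) :=
  (((List.finRange m).map fun i => (Vtx.s i, Vtx.s' i)) ++
   ((List.finRange m).flatMap fun i =>
     (List.range B).map fun j => (Vtx.s i, Vtx.r i j)) ++
   ((List.finRange (3 * m)).flatMap fun i =>
     (List.range (n i - 1)).map fun j => (Vtx.w i j, Vtx.w i (j + 1))) ++
   ((List.finRange (3 * m)).map fun i => (Vtx.w i (n i - 1), Vtx.wt i)) ++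
   ((List.finRange m).flatMap fun i => (List.range B).flatMap fun j =>
     [(Vtx.r i j, Vtx.rt i j), (Vtx.r i j, Vtx.rb i j)])).toFinset

/-- The integers `n_1, …, n_{3m}` can be partitioned into `m` triples each
summing to `B`. -/
def ThreePartition (m B : ℕ) (n : Fin (3 * m) → ℕ) : Prop :=
  ∃ f : Fin (3 * m) → Fin m, ∀ t : Fin m,
    (Finset.univ.filter fun i => f i = t).card = 3 ∧
    ∑ i ∈ Finset.univ.filter (fun i => f i = t), n i = B

theorem zip_tail_of_pairwise {α : Type*} {R : α → α → Prop} :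
    ∀ {l : List α}, l.Pairwise R → ∀ {a b : α}, (a, b) ∈ l.zip l.tail → R a b
  | [], _, _, _, h => by simp at h
  | [_], _, _, _, h => by simp at h
  | x :: y :: l, hp, a, b, h => by
    simp only [List.tail_cons, List.zip_cons_cons, List.mem_cons, Prod.mk.injEq] at h
    rcases h with ⟨rfl, rfl⟩ | h
    · exact (List.pairwise_cons.1 hp).1 _ (by simp)
    · exact zip_tail_of_pairwise (l := y :: l) (List.pairwise_cons.1 hp).2 (by simpa using h)

theorem isChain_of_zip_tail {α : Type*} {A : α → α → Prop} :
    ∀ (l : List α), (∀ a b, (a, b) ∈ l.zip l.tail → A a b) → l.IsChain A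
  | [], _ => List.IsChain.nil
  | [_], _ => List.IsChain.singleton _
  | x :: y :: l, h => by
    refine List.IsChain.cons_cons (h _ _ (by simp)) (isChain_of_zip_tail (y :: l) ?_)
    intro a b hab
    apply h
    simp only [List.tail_cons, List.zip_cons_cons, List.mem_cons]
    right
    simpa using hab

/-- Rank of a vertex. -/
def rk (m B : ℕ) (n : Fin (3 * m) → ℕ) : Vtx m → ℕ
  | .s i => 2 * i
  | .s' i => 2 * i + 1
  | .w i j => 2 * m + i * B + j
  | .wt i => 2 * m + i * B + n i
  | .r i j => 2 * m + 3 * m * B + i * B + j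
  | .rt i j => 2 * m + 3 * m * B + i * B + j + 1
  | .rb i j => 2 * m + 3 * m * B + i * B + j + 1

theorem blk {B a b : ℕ} (h : a < b) : a * B + B ≤ b * B := by
  have := Nat.mul_le_mul_right B (Nat.succ_le_of_lt h)
  rwa [Nat.succ_mul] at this

theorem mainPath_pairwise (m B : ℕ) (n : Fin (3 * m) → ℕ) (hb : ∀ i, n i < B) :
    (mainPath m B n).Pairwise (fun a b => rk m B n a < rk m B n b) := by
  unfold mainPath
  simp only [List.pairwise_append, List.pairwise_flatMap, List.pairwise_map]
  refine ⟨⟨⟨?_, ?_⟩, ⟨?_, ?_⟩, ?_⟩, ⟨?_, ?_⟩, ?_⟩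
  · intro a _; simp [rk]
  · refine (List.pairwise_lt_finRange m).imp ?_
    intro a b hab
    have : (a : ℕ) < b := hab
    simp [rk]; omega
  · intro a _
    refine List.pairwise_lt_range.imp ?_
    intro a b hab
    simp [rk]; omega
  · refine (List.pairwise_lt_finRange _).imp ?_
    intro a b hab
    have : (a : ℕ) < b := hab
    have := blk (B := B) this
    have := hb a
    simp only [List.mem_map, List.mem_range]
    rintro _ ⟨j, hj, rfl⟩ _ ⟨k, hk, rfl⟩
    simp [rk]; omega
  · simp only [List.mem_map, List.mem_flatMap, List.mem_range]
    rintro x ⟨i, _, hx⟩ _ ⟨i', _, j, hj, rfl⟩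
    have := i.2
    simp at hx
    rcases hx with rfl | rfl <;> simp [rk] <;> omega
  · intro a _
    refine List.pairwise_lt_range.imp ?_
    intro a b hab
    simp [rk]; omega
  · refine (List.pairwise_lt_finRange _).imp ?_
    intro a b hab
    have : (a : ℕ) < b := hab
    have := blk (B := B) this
    simp only [List.mem_map, List.mem_range]
    rintro _ ⟨j, hj, rfl⟩ _ ⟨k, hk, rfl⟩
    simp [rk]; omega
  · simp only [List.mem_append, List.mem_map, List.mem_flatMap, List.mem_range]
    rintro x hx _ ⟨i', _, j, hj, rfl⟩
    rcases hx with ⟨i, _, hx⟩ | ⟨i, _, k, hk, rfl⟩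
    · have := i.2
      simp at hx
      rcases hx with rfl | rfl <;> simp [rk] <;> omega
    · have := blk (B := B) i.2
      have := hb i
      simp [rk]; omega

/-- Valid vertices with outgoing edges. -/
def Src (m B : ℕ) (n : Fin (3 * m) → ℕ) : Vtx m → Prop
  | .s _ => True
  | .s' _ => True
  | .w i j => j < n i
  | .r _ j => j < B
  | _ => False

theorem mem_mainPath {m B : ℕ} {n : Fin (3 * m) → ℕ} {v : Vtx m} :
    v ∈ mainPath m B n ↔ Src m B n v := by
  cases v <;> simp [mainPath, Src]

theorem mem_hardD {m B : ℕ} {n : Fin (3 * m) → ℕ} {a b : Vtx m} :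
    (a, b) ∈ hardD m B n ↔ (a, b) ∈ (mainPath m B n).zip (mainPath m B n).tail ∨
      (∃ i, a = .w i (n i - 1) ∧ b = .wt i) ∨
      (∃ i j, j < B ∧ a = .r i j ∧ (b = .rt i j ∨ b = .rb i j)) := by
  simp only [hardD, listEdges, Finset.mem_union, List.mem_toFinset, List.mem_map,
    List.mem_finRange, true_and, List.mem_flatMap, List.mem_range, List.mem_cons,
    Prod.mk.injEq, List.not_mem_nil, or_false, or_assoc]
  refine or_congr Iff.rfl (or_congr ?_ ?_)
  · exact exists_congr fun i => ⟨fun h => ⟨h.1.symm, h.2.symm⟩, fun h => ⟨h.1.symm, h.2.symm⟩⟩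
  · refine exists_congr fun i => exists_congr fun j => and_congr Iff.rfl ?_
    tauto

theorem hardD_rk {m B : ℕ} {n : Fin (3 * m) → ℕ} (hb : ∀ i, n i < B) (hpos : ∀ i, 0 < n i)
    {a b : Vtx m} (h : Adj (hardD m B n) a b) :
    Src m B n a ∧ rk m B n a < rk m B n b := by
  rcases mem_hardD.1 h with h | ⟨i, rfl, rfl⟩ | ⟨i, j, hj, rfl, rfl | rfl⟩
  · exact ⟨mem_mainPath.1 (List.of_mem_zip h).1,
      zip_tail_of_pairwise (mainPath_pairwise m B n hb) h⟩
  · have := hpos i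
    simp [rk, Src]; omega
  · simp [rk, Src]; omega
  · simp [rk, Src]; omega

theorem tc_rk {m B : ℕ} {n : Fin (3 * m) → ℕ} (hb : ∀ i, n i < B) (hpos : ∀ i, 0 < n i)
    {a b : Vtx m} (h : TCAdj (hardD m B n) a b) :
    Src m B n a ∧ rk m B n a < rk m B n b := by
  obtain ⟨hne, h⟩ := h
  have key : ∀ c d, ReflTransGen (Adj (hardD m B n)) c d → rk m B n c ≤ rk m B n d := by
    intro c d hc
    induction hc with
    | refl => exact le_rfl
    | tail _ h2 ih => exact ih.trans (hardD_rk hb hpos h2).2.le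
  rcases ReflTransGen.cases_head h with h | ⟨c, h1, h2⟩
  · exact absurd h hne
  · exact ⟨(hardD_rk hb hpos h1).1, (hardD_rk hb hpos h1).2.trans_le (key c b h2)⟩

theorem tc_of_rk {m B : ℕ} {n : Fin (3 * m) → ℕ} (hb : ∀ i, n i < B)
    {a b : Vtx m} (ha : Src m B n a) (hbb : Src m B n b) (hlt : rk m B n a < rk m B n b) :
    TCAdj (hardD m B n) a b := by
  refine ⟨fun h => by subst h; omega, ?_⟩
  have hc : (mainPath m B n).IsChain (ReflTransGen (Adj (hardD m B n))) :=
    isChain_of_zip_tail _ fun a b h => ReflTransGen.single (mem_hardD.2 (Or.inl h))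
  have hp := (hc.pairwise.and (mainPath_pairwise m B n hb))
  have hq : (mainPath m B n).Pairwise (fun a b => 
      (rk m B n a < rk m B n b → ReflTransGen (Adj (hardD m B n)) a b)) :=
    hp.imp fun h _ => h.1
  have hq' : (mainPath m B n).Pairwise (flip fun a b => 
      (rk m B n a < rk m B n b → ReflTransGen (Adj (hardD m B n)) a b)) :=
    hp.imp fun h h' => absurd h.2 (by omega)
  exact hq.forall_of_forall_of_flip (fun x _ h => absurd h (lt_irrefl _)) hq'
    (mem_mainPath.2 ha) (mem_mainPath.2 hbb) hlt

theorem reach_of_diPath {α : Type*} {A : α → α → Prop} {s t : α} {l : List α}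
    (h : DiPath A s t l) : ReflTransGen A s t := by
  obtain ⟨hc, -, h1, h2⟩ := h
  cases l with
  | nil => simp at h1
  | cons x l =>
    simp at h1
    subst h1
    refine List.relationReflTransGen_of_exists_isChain_cons l hc ?_
    rw [List.getLast?_eq_some_getLast (List.cons_ne_nil _ _)] at h2
    simpa using h2

theorem diPath_of_reach {α : Type*} {A : α → α → Prop} (f : α → ℕ)
    (hf : ∀ a b, A a b → f a < f b) {s t : α}
    (h : ReflTransGen A s t) : ∃ l, DiPath A s t l := by
  obtain ⟨l, hl, hlast⟩ := List.exists_isChain_cons_of_relationReflTransGen h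
  refine ⟨s :: l, hl, ?_, by simp, ?_⟩
  · have h1 : (s :: l).IsChain (fun a b => f a < f b) := hl.imp hf
    have : Trans (fun a b => f a < f b) (fun a b => f a < f b) (fun a b : α => f a < f b) :=
      ⟨fun h1 h2 => lt_trans h1 h2⟩
    exact h1.pairwise.imp fun h e => by subst e; omega
  · rw [List.getLast?_eq_some_getLast (List.cons_ne_nil _ _), hlast]

theorem mem_hardK {m B : ℕ} {n : Fin (3 * m) → ℕ} {a b : Vtx m} :
    (a, b) ∈ hardK m B n ↔ (∃ i, a = .s i ∧ b = .s' i) ∨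
      (∃ i j, j < B ∧ a = .s i ∧ b = .r i j) ∨
      (∃ i j, j < n i - 1 ∧ a = .w i j ∧ b = .w i (j + 1)) ∨
      (∃ i, a = .w i (n i - 1) ∧ b = .wt i) ∨
      (∃ i j, j < B ∧ a = .r i j ∧ (b = .rt i j ∨ b = .rb i j)) := by
  simp only [hardK, List.mem_append, List.mem_toFinset, List.mem_map,
    List.mem_finRange, true_and, List.mem_flatMap, List.mem_range, List.mem_cons,
    Prod.mk.injEq, List.not_mem_nil, or_false, or_assoc, and_or_left,
    @eq_comm _ a, @eq_comm _ b]

theorem three_forward (m B : ℕ) (n : Fin (3 * m) → ℕ) (hpos : ∀ i, 0 < n i)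
    (hb : ∀ i, n i < B) (h : ThreePartition m B n) :
    ∃ H : Finset (Vtx m × Vtx m), RSPPSolution (hardD m B n) (hardK m B n) 2 H := by
  classical
  obtain ⟨f, hf⟩ := h
  have h3 : ∀ t, ∃ x y z, ∀ i, f i = t → i = x ∨ i = y ∨ i = z := by
    intro t
    obtain ⟨x, y, z, -, -, -, h⟩ := Finset.card_eq_three.1 (hf t).1
    refine ⟨x, y, z, fun i hi => ?_⟩
    have : i ∈ Finset.univ.filter (fun i => f i = t) := by simp [hi]
    rw [h] at this
    simpa using this
  choose x y z hxyz using h3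
  have hg : ∀ t, ∃ g : (i : Fin (3 * m)) → ℕ → ℕ, (∀ i j, f i = t → j < n i → g i j < B) ∧
      ∀ k < B, ∃ i j, f i = t ∧ j < n i ∧ g i j = k := by
    intro t
    let S := (Finset.univ.filter fun i => f i = t).sigma (fun i => Finset.range (n i))
    have hS : S.card = B := by simp [S, Finset.card_sigma, (hf t).2]
    let e := S.equivFinOfCardEq hS
    refine ⟨fun i j => if h : ⟨i, j⟩ ∈ S then e ⟨⟨i, j⟩, h⟩ else 0, ?_, ?_⟩
    · intro i j hi hj
      have : (⟨i, j⟩ : (_ : Fin (3 * m)) × ℕ) ∈ S := by simp [S, hi, hj]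
      simp only [this, dif_pos]
      exact (e _).2
    · intro k hk
      obtain ⟨⟨⟨i, j⟩, hij⟩, he⟩ := e.surjective ⟨k, hk⟩
      have hij' := hij
      simp [S] at hij'
      refine ⟨i, j, hij'.1, hij'.2, ?_⟩
      simp only [hij, dif_pos, he]
  choose g hg1 hg2 using hg
  let nb1 : Vtx m → Vtx m := fun v => match v with
    | .s i => .s' i
    | .s' i => .w (y i) 0
    | .w i j => if j + 1 < n i then .w i (j + 1) else .wt i
    | .r i j => .rt i j
    | v => v
  let nb2 : Vtx m → Vtx m := fun v => match v with
    | .s i => .w (x i) 0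
    | .s' i => .w (z i) 0
    | .w i j => .r (f i) (g (f i) i j)
    | .r i j => .rb i j
    | v => v
  let H := (mainPath m B n).toFinset.biUnion fun v => {(v, nb1 v), (v, nb2 v)}
  have memH : ∀ a b, (a, b) ∈ H ↔ Src m B n a ∧ (b = nb1 a ∨ b = nb2 a) := by
    intro a b
    simp only [H, Finset.mem_biUnion, List.mem_toFinset, mem_mainPath, Finset.mem_insert,
      Finset.mem_singleton, Prod.mk.injEq]
    constructor
    · rintro ⟨v, hv, ⟨rfl, rfl⟩ | ⟨rfl, rfl⟩⟩ <;> simp [hv]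
    · rintro ⟨ha, h | h⟩
      · exact ⟨a, ha, Or.inl ⟨rfl, h⟩⟩
      · exact ⟨a, ha, Or.inr ⟨rfl, h⟩⟩
  have hTC : ∀ a b, (a, b) ∈ H → TCAdj (hardD m B n) a b := by
    intro a b hab
    obtain ⟨ha, hab⟩ := (memH a b).1 hab
    cases a with
    | s i =>
      have := i.2
      rcases hab with rfl | rfl
      · exact tc_of_rk hb ha (by simp [nb1, Src]) (by simp [nb1, rk])
      · exact tc_of_rk hb ha (by simp [nb2, Src, hpos]) (by simp [nb2, rk]; omega)
    | s' i =>
      have := i.2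
      rcases hab with rfl | rfl
      · exact tc_of_rk hb ha (by simp [nb1, Src, hpos]) (by simp [nb1, rk]; omega)
      · exact tc_of_rk hb ha (by simp [nb2, Src, hpos]) (by simp [nb2, rk]; omega)
    | w i j =>
      have hj : j < n i := ha
      rcases hab with rfl | rfl
      · by_cases h : j + 1 < n i
        · exact tc_of_rk hb ha (by simp [nb1, Src, h]) (by simp [nb1, rk, h])
        · have : j = n i - 1 := by omega
          simp only [nb1, h, if_false]
          exact ⟨by simp, ReflTransGen.single (mem_hardD.2 (Or.inr (Or.inl ⟨i, by rw [this], rfl⟩)))⟩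
      · have := blk (B := B) i.2
        have := hb i
        exact tc_of_rk hb ha (hg1 _ _ _ rfl hj) (by simp [nb2, rk]; omega)
    | r i j =>
      have hj : j < B := ha
      rcases hab with rfl | rfl
      · exact ⟨by simp [nb1], ReflTransGen.single
          (mem_hardD.2 (Or.inr (Or.inr ⟨i, j, hj, rfl, Or.inl rfl⟩)))⟩
      · exact ⟨by simp [nb2], ReflTransGen.single
          (mem_hardD.2 (Or.inr (Or.inr ⟨i, j, hj, rfl, Or.inr rfl⟩)))⟩
    | wt i => exact ha.elim
    | rt i j => exact ha.elim
    | rb i j => exact ha.elim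
  refine ⟨H, fun e he => hTC e.1 e.2 he, ?_, ?_⟩
  · intro v
    have : (H.filter fun e => e.1 = v) ⊆ {(v, nb1 v), (v, nb2 v)} := by
      rintro ⟨a, b⟩ hab
      simp only [Finset.mem_filter, memH] at hab
      obtain ⟨⟨_, h | h⟩, rfl⟩ := hab <;> simp [h]
    exact (Finset.card_le_card this).trans Finset.card_le_two
  · rintro ⟨a, b⟩ hab
    refine diPath_of_reach (rk m B n) (fun a b h => (tc_rk hb hpos (hTC a b h)).2) ?_
    have e1 : ∀ v, Src m B n v → Adj H v (nb1 v) := fun v hv => (memH _ _).2 ⟨hv, Or.inl rfl⟩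
    have e2 : ∀ v, Src m B n v → Adj H v (nb2 v) := fun v hv => (memH _ _).2 ⟨hv, Or.inr rfl⟩
    have ew : ∀ i j, j + 1 < n i → Adj H (.w i j) (.w i (j + 1)) := by
      intro i j hj
      have := e1 (.w i j) (show j < n i by omega)
      simpa only [nb1, hj, if_true] using this
    rcases mem_hardK.1 hab with ⟨i, rfl, rfl⟩ | ⟨t, k, hk, rfl, rfl⟩ | ⟨i, j, hj, rfl, rfl⟩ |
      ⟨i, rfl, rfl⟩ | ⟨i, j, hj, rfl, rfl | rfl⟩
    · exact ReflTransGen.single (e1 (.s i) trivial)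
    · obtain ⟨i, j, hi, hj, hgk⟩ := hg2 t k hk
      have hw0 : ReflTransGen (Adj H) (.s t) (.w i 0) := by
        rcases hxyz t i hi with rfl | rfl | rfl
        · exact ReflTransGen.single (e2 (.s t) trivial)
        · exact (ReflTransGen.single (e1 (.s t) trivial)).tail (e1 (.s' t) trivial)
        · exact (ReflTransGen.single (e1 (.s t) trivial)).tail (e2 (.s' t) trivial)
      have hwj : ∀ j, j < n i → ReflTransGen (Adj H) (.s t) (.w i j) := by
        intro j
        induction j with
        | zero => intro _; exact hw0
        | succ j ih => intro hj; exact (ih (by omega)).tail (ew i j hj)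
      have := e2 (.w i j) hj
      simp only [nb2, hi, hgk] at this
      exact (hwj j hj).tail this
    · exact ReflTransGen.single (ew i j (by omega))
    · have := hpos i
      have h2 := e1 (.w i (n i - 1)) (show n i - 1 < n i by omega)
      have h3 : ¬ (n i - 1 + 1 < n i) := by omega
      simp only [nb1, h3, if_false] at h2
      exact ReflTransGen.single h2
    · exact ReflTransGen.single (e1 (.r i j) hj)
    · exact ReflTransGen.single (e2 (.r i j) hj)

/-- Forced edges. -/
def Fc {m : ℕ} (n : Fin (3 * m) → ℕ) : Vtx m → Vtx m → Prop
  | .s i, .s' i' => i = i'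
  | .w i j, .w i' j' => i = i' ∧ j' = j + 1
  | .w i j, .wt i' => i = i' ∧ j + 1 = n i
  | .r i j, .rt i' j' => i = i' ∧ j = j'
  | .r i j, .rb i' j' => i = i' ∧ j = j'
  | _, _ => False

theorem Fc_left_unique {m : ℕ} {n : Fin (3 * m) → ℕ} {a b c : Vtx m}
    (h1 : Fc n a c) (h2 : Fc n b c) : a = b := by
  cases a <;> cases c <;> simp only [Fc] at h1 <;> cases b <;> simp only [Fc] at h2 <;> grind

open Classical in
/-- Free edges with source satisfying `P`. -/
noncomputable def Fr {m : ℕ} (n : Fin (3 * m) → ℕ) (H : Finset (Vtx m × Vtx m))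
    (P : Vtx m → Prop) : Finset (Vtx m × Vtx m) :=
  H.filter fun e => P e.1 ∧ ¬ Fc n e.1 e.2

theorem mem_Fr {m : ℕ} {n : Fin (3 * m) → ℕ} {H : Finset (Vtx m × Vtx m)}
    {P : Vtx m → Prop} {a b : Vtx m} :
    (a, b) ∈ Fr n H P ↔ (a, b) ∈ H ∧ P a ∧ ¬ Fc n a b := by
  simp [Fr]

theorem fr_one {m : ℕ} {n : Fin (3 * m) → ℕ} {H : Finset (Vtx m × Vtx m)}
    (hdeg : ∀ v, outDeg H v ≤ 2) {v u : Vtx m} (hu : (v, u) ∈ H) (hF : Fc n v u) :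
    (Fr n H (fun x => x = v)).card ≤ 1 := by
  have hn : (v, u) ∉ Fr n H (fun x => x = v) := by simp [mem_Fr, hF]
  have hsub : insert (v, u) (Fr n H (fun x => x = v)) ⊆ H.filter fun e => e.1 = v := by
    rintro ⟨a, b⟩ h
    simp only [Finset.mem_insert, Prod.mk.injEq, mem_Fr, Finset.mem_filter] at h ⊢
    rcases h with ⟨rfl, rfl⟩ | h
    · exact ⟨hu, rfl⟩
    · exact ⟨h.1, h.2.1⟩
  have := Finset.card_le_card hsub
  rw [Finset.card_insert_of_notMem hn] at this
  have := hdeg v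
  unfold outDeg at this
  omega

theorem fr_two {m : ℕ} {n : Fin (3 * m) → ℕ} {H : Finset (Vtx m × Vtx m)}
    (hdeg : ∀ v, outDeg H v ≤ 2) {v : Vtx m} :
    (Fr n H (fun x => x = v)).card ≤ 2 := by
  refine le_trans (Finset.card_le_card ?_) (hdeg v)
  rintro ⟨a, b⟩ h
  simp only [mem_Fr, Finset.mem_filter] at h ⊢
  exact ⟨h.1, h.2.1⟩

/-- Data extracted from a solution. -/
structure Sol (m B : ℕ) (n : Fin (3 * m) → ℕ) (H : Finset (Vtx m × Vtx m)) : Prop where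
  src : ∀ a b, (a, b) ∈ H → Src m B n a
  deg : ∀ v, outDeg H v ≤ 2
  hs : ∀ i, (Vtx.s i, Vtx.s' i) ∈ H
  hw : ∀ i j, j + 1 < n i → (Vtx.w i j, Vtx.w i (j + 1)) ∈ H
  hwt : ∀ i j, j + 1 = n i → (Vtx.w i j, Vtx.wt i) ∈ H
  hrt : ∀ i j, j < B → (Vtx.r i j, Vtx.rt i j) ∈ H
  hrb : ∀ i j, j < B → (Vtx.r i j, Vtx.rb i j) ∈ H
  reach : ∀ i j, j < B → ReflTransGen (Adj H) (Vtx.s i) (Vtx.r i j)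

theorem Sol.r_free {m B : ℕ} {n : Fin (3 * m) → ℕ} {H : Finset (Vtx m × Vtx m)}
    (S : Sol m B n H) {i j b} (h : (Vtx.r i j, b) ∈ H) : Fc n (Vtx.r i j) b := by
  have hj : j < B := S.src _ _ h
  by_contra hF
  have h1 : b ≠ .rt i j := by rintro rfl; exact hF ⟨rfl, rfl⟩
  have h2 : b ≠ .rb i j := by rintro rfl; exact hF ⟨rfl, rfl⟩
  have hsub : ({(.r i j, b), (.r i j, .rt i j), (.r i j, .rb i j)} : Finset (Vtx m × Vtx m)) ⊆
      H.filter fun e => e.1 = .r i j := by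
    intro e he
    simp only [Finset.mem_insert, Finset.mem_singleton] at he
    rcases he with rfl | rfl | rfl
    · simp [h]
    · simp [S.hrt i j hj]
    · simp [S.hrb i j hj]
  have := (Finset.card_le_card hsub).trans (S.deg _)
  rw [Finset.card_insert_of_notMem (by simp [h1, h2]),
    Finset.card_insert_of_notMem (by simp), Finset.card_singleton] at this
  omega

open Classical in
theorem Sol.count {m B : ℕ} {n : Fin (3 * m) → ℕ} {H : Finset (Vtx m × Vtx m)}
    (S : Sol m B n H) (P : Vtx m → Prop) :
    (Fr n H P).card ≤ (Finset.univ.filter fun t => P (.s t)).card +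
      (Finset.univ.filter fun t => P (.s' t)).card * 2 +
      ∑ i, ((Finset.range (n i)).filter fun j => P (.w i j)).card := by
  have hsub : Fr n H P ⊆
      (Finset.univ.filter fun t => P (.s t)).biUnion (fun t => Fr n H (fun x => x = .s t)) ∪
      (Finset.univ.filter fun t => P (.s' t)).biUnion (fun t => Fr n H (fun x => x = .s' t)) ∪
      Finset.univ.biUnion (fun i => ((Finset.range (n i)).filter fun j => P (.w i j)).biUnion
        (fun j => Fr n H (fun x => x = .w i j))) := by
    rintro ⟨a, b⟩ hab
    obtain ⟨h1, h2, h3⟩ := mem_Fr.1 hab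
    have hs := S.src _ _ h1
    simp only [Finset.mem_union, Finset.mem_biUnion, Finset.mem_filter, Finset.mem_univ,
      true_and, mem_Fr, Finset.mem_range]
    cases a with
    | s i => exact Or.inl (Or.inl ⟨i, h2, h1, rfl, h3⟩)
    | s' i => exact Or.inl (Or.inr ⟨i, h2, h1, rfl, h3⟩)
    | w i j => exact Or.inr ⟨i, j, ⟨hs, h2⟩, h1, rfl, h3⟩
    | r i j => exact absurd (S.r_free h1) h3
    | wt i => exact hs.elim
    | rt i j => exact hs.elim
    | rb i j => exact hs.elim
  refine (Finset.card_le_card hsub).trans ((Finset.card_union_le _ _).trans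
    (add_le_add ((Finset.card_union_le _ _).trans (add_le_add ?_ ?_)) ?_))
  · refine (Finset.card_biUnion_le_card_mul _ _ 1 ?_).trans (by simp)
    intro t _
    exact fr_one S.deg (S.hs t) rfl
  · exact Finset.card_biUnion_le_card_mul _ _ 2 fun t _ => fr_two S.deg
  · refine Finset.card_biUnion_le.trans (Finset.sum_le_sum fun i _ => ?_)
    refine (Finset.card_biUnion_le_card_mul _ _ 1 ?_).trans (by simp)
    intro j hj
    simp only [Finset.mem_filter, Finset.mem_range] at hj
    by_cases h : j + 1 < n i
    · exact fr_one S.deg (S.hw i j h) ⟨rfl, rfl⟩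
    · have h' : j + 1 = n i := by omega
      exact fr_one S.deg (S.hwt i j h') ⟨rfl, h'⟩

theorem Sol.of_solution {m B : ℕ} {n : Fin (3 * m) → ℕ} {H : Finset (Vtx m × Vtx m)}
    (hpos : ∀ i, 0 < n i) (hb : ∀ i, n i < B)
    (h : RSPPSolution (hardD m B n) (hardK m B n) 2 H) : Sol m B n H := by
  obtain ⟨hT, hdeg, hK⟩ := h
  have hE : ∀ a b, (a, b) ∈ H → Src m B n a ∧ rk m B n a < rk m B n b :=
    fun a b hab => tc_rk hb hpos (hT _ hab)
  have hR : ∀ a b, (a, b) ∈ hardK m B n → ReflTransGen (Adj H) a b := by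
    intro a b hab
    obtain ⟨l, hl⟩ := hK _ hab
    exact reach_of_diPath hl
  have key : ∀ c d, ReflTransGen (Adj H) c d → rk m B n c ≤ rk m B n d := by
    intro c d hc
    induction hc with
    | refl => exact le_rfl
    | tail _ h2 ih => exact ih.trans (hE _ _ h2).2.le
  have dir : ∀ a b, (a, b) ∈ hardK m B n → rk m B n b = rk m B n a + 1 → (a, b) ∈ H := by
    intro a b hab hr
    rcases ReflTransGen.cases_head (hR a b hab) with h | ⟨c, h1, h2⟩
    · subst h; omega
    · have := (hE _ _ h1).2
      rcases ReflTransGen.cases_head h2 with h | ⟨d, h3, h4⟩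
      · subst h; exact h1
      · have := (hE _ _ h3).2
        have := key _ _ h4
        omega
  refine ⟨fun a b h => (hE a b h).1, hdeg, ?_, ?_, ?_, ?_, ?_, ?_⟩
  · exact fun i => dir _ _ (mem_hardK.2 (Or.inl ⟨i, rfl, rfl⟩)) (by simp [rk])
  · exact fun i j hj => dir _ _ (mem_hardK.2 (Or.inr (Or.inr (Or.inl ⟨i, j, by omega, rfl, rfl⟩))))
      (by simp [rk]; omega)
  · intro i j hj
    have : j = n i - 1 := by omega
    exact dir _ _ (mem_hardK.2 (Or.inr (Or.inr (Or.inr (Or.inl ⟨i, by rw [this], rfl⟩)))))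
      (by simp [rk]; omega)
  · exact fun i j hj => dir _ _ (mem_hardK.2 (Or.inr (Or.inr (Or.inr (Or.inr
      ⟨i, j, hj, rfl, Or.inl rfl⟩))))) (by simp [rk])
  · exact fun i j hj => dir _ _ (mem_hardK.2 (Or.inr (Or.inr (Or.inr (Or.inr
      ⟨i, j, hj, rfl, Or.inr rfl⟩))))) (by simp [rk])
  · exact fun i j hj => hR _ _ (mem_hardK.2 (Or.inr (Or.inl ⟨i, j, hj, rfl, rfl⟩)))

/-- All `r` vertices together with chosen block heads. -/
def tgt (m B : ℕ) (h : Fin (3 * m) → ℕ) (T : Finset (Fin m)) (I : Finset (Fin (3 * m))) :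
    Finset (Vtx m) :=
  (T ×ˢ Finset.range B).image (fun p => Vtx.r p.1 p.2) ∪ I.image (fun i => Vtx.w i (h i))

theorem card_tgt (m B : ℕ) (h : Fin (3 * m) → ℕ) (T : Finset (Fin m))
    (I : Finset (Fin (3 * m))) : (tgt m B h T I).card = T.card * B + I.card := by
  unfold tgt
  rw [Finset.card_union_of_disjoint, Finset.card_image_of_injective, Finset.card_image_of_injective,
    Finset.card_product, Finset.card_range]
  · intro a b hab; simp at hab; exact hab.1
  · rintro ⟨a, b⟩ ⟨c, d⟩ hab; simpa using hab
  · rw [Finset.disjoint_left]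
    intro x hx hx'
    simp only [Finset.mem_image] at hx hx'
    obtain ⟨p, -, rfl⟩ := hx
    obtain ⟨q, -, hq⟩ := hx'
    cases hq

theorem mem_tgt {m B : ℕ} {h : Fin (3 * m) → ℕ} {T : Finset (Fin m)}
    {I : Finset (Fin (3 * m))} {v : Vtx m} : v ∈ tgt m B h T I ↔
      (∃ t ∈ T, ∃ j < B, v = .r t j) ∨ ∃ i ∈ I, v = .w i (h i) := by
  simp only [tgt, Finset.mem_union, Finset.mem_image, Finset.mem_product, Finset.mem_range,
    Prod.exists]
  refine or_congr ?_ ?_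
  · constructor
    · rintro ⟨t, j, ⟨h1, h2⟩, rfl⟩; exact ⟨t, h1, j, h2, rfl⟩
    · rintro ⟨t, h1, j, h2, rfl⟩; exact ⟨t, j, ⟨h1, h2⟩, rfl⟩
  · exact exists_congr fun i => and_congr Iff.rfl eq_comm

open Classical in
/-- Global counting: everything is tight. -/
theorem Sol.tight {m B : ℕ} {n : Fin (3 * m) → ℕ} {H : Finset (Vtx m × Vtx m)}
    (S : Sol m B n H) (hn : ∀ i, 2 ≤ n i) (hsum : ∑ i, n i = m * B)
    (P : Vtx m → Prop) (hP : ∀ v, P v ↔ ∃ t, ReflTransGen (Adj H) (.s t) v) :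
    (∀ i, ∀ j < n i, P (.w i j)) ∧
    (Fr n H P).image Prod.snd = tgt m B (fun _ => 0) Finset.univ Finset.univ ∧
    Set.InjOn Prod.snd (Fr n H P : Set (Vtx m × Vtx m)) := by
  have parent : ∀ v, P v → (∀ t, v ≠ .s t) → ∃ u, P u ∧ (u, v) ∈ H := by
    intro v hv hne
    obtain ⟨t, ht⟩ := (hP v).1 hv
    rcases ReflTransGen.cases_tail ht with h | ⟨u, h1, h2⟩
    · exact absurd h (hne t)
    · exact ⟨u, (hP u).2 ⟨t, h1⟩, h2⟩
  let I : Finset (Fin (3 * m)) := Finset.univ.filter fun i => ∃ j, P (.w i j)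
  have hh : ∀ i, ∃ h, i ∈ I → P (.w i h) ∧ ∀ k < h, ¬ P (.w i k) := by
    intro i
    by_cases hi : i ∈ I
    · have hi' : ∃ j, P (.w i j) := by simpa [I] using hi
      exact ⟨Nat.find hi', fun _ => ⟨Nat.find_spec hi', fun k hk => Nat.find_min hi' hk⟩⟩
    · exact ⟨0, fun h => absurd h hi⟩
  choose h hh using hh
  have hsub : tgt m B h Finset.univ I ⊆ (Fr n H P).image Prod.snd := by
    intro v hv
    simp only [Finset.mem_image, Prod.exists, exists_eq_right]
    rcases mem_tgt.1 hv with ⟨t, -, j, hj, rfl⟩ | ⟨i, hi, rfl⟩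
    · obtain ⟨u, hu, huv⟩ := parent (.r t j) ((hP _).2 ⟨t, S.reach t j hj⟩) (by simp)
      exact ⟨u, mem_Fr.2 ⟨huv, hu, by cases u <;> simp [Fc]⟩⟩
    · obtain ⟨u, hu, huv⟩ := parent (.w i (h i)) (hh i hi).1 (by simp)
      refine ⟨u, mem_Fr.2 ⟨huv, hu, ?_⟩⟩
      intro hF
      cases u with
      | w i' j' =>
        obtain ⟨rfl, h2⟩ := hF
        exact (hh _ hi).2 j' (by omega) hu
      | _ => exact hF
  have c1 := Finset.card_le_card hsub
  have c2 : ((Fr n H P).image Prod.snd).card ≤ (Fr n H P).card := Finset.card_image_le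
  have c3 := S.count P
  rw [card_tgt, Finset.card_univ, Fintype.card_fin] at c1
  have d1 : (Finset.univ.filter fun t => P (.s t)).card ≤ m := by
    simpa using Finset.card_filter_le (Finset.univ : Finset (Fin m)) fun t => P (.s t)
  have d2 : (Finset.univ.filter fun t => P (.s' t)).card ≤ m := by
    simpa using Finset.card_filter_le (Finset.univ : Finset (Fin m)) fun t => P (.s' t)
  set l : Fin (3 * m) → ℕ := fun i => ((Finset.range (n i)).filter fun j => P (.w i j)).card with hl
  have c4 : (Fr n H P).card ≤ (Finset.univ.filter fun t => P (.s t)).card +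
      (Finset.univ.filter fun t => P (.s' t)).card * 2 + ∑ i, l i := c3
  have hln : ∀ i, l i ≤ n i := fun i => by
    simpa using Finset.card_filter_le (Finset.range (n i)) fun j => P (.w i j)
  have hl0 : ∀ i, i ∉ I → l i = 0 := by
    intro i hi
    simp only [I, Finset.mem_filter, Finset.mem_univ, true_and, not_exists] at hi
    simp [hl, hi]
  have hIc : I.card = ∑ i, if i ∈ I then 1 else 0 := by simp
  have hle : ∀ i ∈ Finset.univ, l i + 1 ≤ n i + if i ∈ I then 1 else 0 := by
    intro i _
    by_cases hi : i ∈ I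
    · simp [hi, hln i]
    · have := hl0 i hi
      have := hn i
      simp [hi]; omega
  have s1 : ∑ i, (l i + 1) = ∑ i, l i + 3 * m := by simp [Finset.sum_add_distrib]
  have s2 : ∑ i, (n i + if i ∈ I then 1 else 0) = m * B + I.card := by
    rw [Finset.sum_add_distrib, hsum, hIc]
  have s3 := Finset.sum_le_sum hle
  have heq := (Finset.sum_eq_sum_iff_of_le hle).1 (by omega)
  have hI : ∀ i, i ∈ I := by
    intro i
    by_contra hi
    have h1 := heq i (Finset.mem_univ i)
    have := hl0 i hi
    have := hn i
    simp [hi] at h1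
    omega
  have hall : ∀ i, ∀ j < n i, P (.w i j) := by
    intro i j hj
    have h1 := heq i (Finset.mem_univ i)
    simp only [hI i, if_true] at h1
    have h2 : ((Finset.range (n i)).filter fun j => P (.w i j)).card = (Finset.range (n i)).card := by
      rw [Finset.card_range]; simp only [hl] at h1; omega
    exact (Finset.card_filter_eq_iff.1 h2) j (Finset.mem_range.2 hj)
  have hIu : I = Finset.univ := Finset.eq_univ_iff_forall.2 hI
  have hh0 : h = fun _ => 0 := by
    funext i
    by_contra h0
    exact (hh i (hI i)).2 0 (Nat.pos_of_ne_zero h0) (hall i 0 (by have := hn i; omega))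
  have hIcard : I.card = 3 * m := by rw [hIu]; simp
  have slu : ∑ i, l i ≤ m * B := hsum ▸ Finset.sum_le_sum fun i _ => hln i
  rw [hIu, hh0] at hsub
  refine ⟨hall, ?_, ?_⟩
  · refine (Finset.eq_of_subset_of_card_le hsub ?_).symm
    rw [card_tgt]
    simp only [Finset.card_univ, Fintype.card_fin]
    omega
  · apply Finset.injOn_of_card_image_eq
    omega

theorem final_arith {m B : ℕ} {n : Fin (3 * m) → ℕ} (hdist : Function.Injective n)
    (hbound : ∀ i, B < 4 * n i ∧ 2 * n i < B) (hB : 5 ≤ B) (I : Finset (Fin (3 * m)))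
    (h : B + I.card = 3 + ∑ i ∈ I, n i) : I.card = 3 := by
  have lo : I.card * (B + 1) ≤ 4 * ∑ i ∈ I, n i := by
    rw [Finset.mul_sum, ← smul_eq_mul]
    exact Finset.card_nsmul_le_sum _ _ _ fun i _ => (hbound i).1
  rcases lt_trichotomy I.card 3 with h3 | h3 | h3
  · exfalso
    interval_cases hc : I.card
    · rw [Finset.card_eq_zero] at hc
      subst hc
      simp at h; omega
    · obtain ⟨a, rfl⟩ := Finset.card_eq_one.1 hc
      have := hbound a
      simp at h; omega
    · obtain ⟨a, b, hab, rfl⟩ := Finset.card_eq_two.1 hc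
      have := hbound a
      have := hbound b
      have := hdist.ne hab
      rw [Finset.sum_pair hab] at h
      omega
  · exact h3
  · exfalso
    by_cases h4 : I.card = 4
    · obtain ⟨a, ha⟩ : I.Nonempty := Finset.card_pos.1 (by omega)
      obtain ⟨b, hb, hab⟩ : ∃ b ∈ I, b ≠ a :=
        Finset.exists_mem_ne (by omega) a
      have hlt : ∃ c ∈ I, B + 1 < 4 * n c := by
        have := (hbound a).1
        have := (hbound b).1
        have := hdist.ne hab
        by_cases hc : B + 1 < 4 * n a
        · exact ⟨a, ha, hc⟩
        · exact ⟨b, hb, by omega⟩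
      have : ∑ i ∈ I, (B + 1) < ∑ i ∈ I, 4 * n i :=
        Finset.sum_lt_sum (fun i _ => (hbound i).1) hlt
      rw [← Finset.mul_sum, Finset.sum_const, h4, smul_eq_mul] at this
      omega
    · obtain ⟨k, hk⟩ : ∃ k, I.card = k + 5 := ⟨I.card - 5, by omega⟩
      obtain ⟨b, rfl⟩ : ∃ b, B = b + 5 := ⟨B - 5, by omega⟩
      rw [hk] at lo h
      nlinarith

theorem three_backward (m B : ℕ) (n : Fin (3 * m) → ℕ)
    (hdist : Function.Injective n) (hpos : ∀ i, 0 < n i)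
    (hsum : ∑ i, n i = m * B)
    (hbound : ∀ i, B < 4 * n i ∧ 2 * n i < B) (H : Finset (Vtx m × Vtx m))
    (hH : RSPPSolution (hardD m B n) (hardK m B n) 2 H) : ThreePartition m B n := by
  classical
  have hb : ∀ i, n i < B := fun i => by have := hbound i; omega
  have S := Sol.of_solution hpos hb hH
  have hn : ∀ i, 2 ≤ n i := by
    intro i
    by_contra hlt
    have h1 : n i = 1 := by have := hpos i; omega
    have hm : 0 < m := by have := i.2; omega
    obtain ⟨j, hj⟩ : ∃ j : Fin (3 * m), j ≠ i := by
      have : Nontrivial (Fin (3 * m)) := Fin.nontrivial_iff_two_le.2 (by omega)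
      exact exists_ne i
    have := hdist.ne hj
    have := hbound i
    have := hbound j
    omega
  let P : Vtx m → Prop := fun v => ∃ t, ReflTransGen (Adj H) (.s t) v
  obtain ⟨hall, himg, hinj⟩ := S.tight hn hsum P (fun v => Iff.rfl)
  have tg : ∀ a b, P a → (a, b) ∈ H → ¬ Fc n a b → (∃ t j, b = .r t j) ∨ ∃ i, b = .w i 0 := by
    intro a b ha hab hF
    have : b ∈ (Fr n H P).image Prod.snd :=
      Finset.mem_image.2 ⟨(a, b), mem_Fr.2 ⟨hab, ha, hF⟩, rfl⟩
    rw [himg] at this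
    rcases mem_tgt.1 this with ⟨t, -, j, -, h⟩ | ⟨i, -, h⟩
    · exact Or.inl ⟨t, j, h⟩
    · exact Or.inr ⟨i, h⟩
  have ntg : ∀ a b, Fc n a b → ¬ ((∃ t j, b = .r t j) ∨ ∃ i, b = .w i 0) := by
    rintro a b hF (⟨t, j, rfl⟩ | ⟨i, rfl⟩) <;> cases a <;> simp [Fc] at hF
  have luniq : ∀ a b c, P a → P b → (a, c) ∈ H → (b, c) ∈ H → a = b := by
    intro a b c ha hb hac hbc
    by_cases h1 : Fc n a c
    · by_cases h2 : Fc n b c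
      · exact Fc_left_unique h1 h2
      · exact absurd (tg b c hb hbc h2) (ntg a c h1)
    · by_cases h2 : Fc n b c
      · exact absurd (tg a c ha hac h1) (ntg b c h2)
      · have := hinj (Finset.mem_coe.2 (mem_Fr.2 ⟨hac, ha, h1⟩))
          (Finset.mem_coe.2 (mem_Fr.2 ⟨hbc, hb, h2⟩)) rfl
        exact congrArg Prod.fst this
  have nos : ∀ a t, P a → (a, Vtx.s t) ∉ H := by
    intro a t ha hat
    by_cases h1 : Fc n a (.s t)
    · cases a <;> exact h1
    · rcases tg _ _ ha hat h1 with ⟨_, _, h⟩ | ⟨_, h⟩ <;> cases h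
  have disj : ∀ t t' v, ReflTransGen (Adj H) (.s t) v → ReflTransGen (Adj H) (.s t') v →
      t = t' := by
    intro t t' v h1
    induction h1 with
    | refl =>
      intro h2
      rcases ReflTransGen.cases_tail h2 with h | ⟨u, h1, h2⟩
      · cases h; rfl
      · exact absurd h2 (nos u t ⟨t', h1⟩)
    | @tail b c h1 hbc ih =>
      intro h2
      rcases ReflTransGen.cases_tail h2 with h | ⟨u, h3, h4⟩
      · subst h
        exact absurd hbc (nos b t' ⟨t, h1⟩)
      · have := luniq b u c ⟨t, h1⟩ ⟨t', h3⟩ hbc h4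
        subst this
        exact ih h3
  have hf : ∀ i, ∃ t, ReflTransGen (Adj H) (.s t) (.w i 0) := fun i => hall i 0 (hpos i)
  choose f hf using hf
  have hfw : ∀ i j, j < n i → ReflTransGen (Adj H) (.s (f i)) (.w i j) := by
    intro i j
    induction j with
    | zero => intro _; exact hf i
    | succ j ih => intro hj; exact (ih (by omega)).tail (S.hw i j hj)
  let I : Fin m → Finset (Fin (3 * m)) := fun t => Finset.univ.filter fun i => f i = t
  have hle : ∀ t ∈ Finset.univ, B + (I t).card ≤ 3 + ∑ i ∈ I t, n i := by
    intro t _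
    let Q : Vtx m → Prop := fun v => ReflTransGen (Adj H) (.s t) v
    have hsub : tgt m B (fun _ => 0) {t} (I t) ⊆ (Fr n H Q).image Prod.snd := by
      intro v hv
      have hQ : Q v ∧ ((∃ t j, v = .r t j) ∨ ∃ i, v = .w i 0) := by
        rcases mem_tgt.1 hv with ⟨t', ht', j, hj, rfl⟩ | ⟨i, hi, rfl⟩
        · rw [Finset.mem_singleton] at ht'
          subst ht'
          exact ⟨S.reach _ j hj, Or.inl ⟨_, _, rfl⟩⟩
        · have : f i = t := by simpa [I] using hi
          subst this
          exact ⟨hf i, Or.inr ⟨_, rfl⟩⟩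
      rcases ReflTransGen.cases_tail hQ.1 with h | ⟨u, h1, h2⟩
      · rcases hQ.2 with ⟨_, _, h'⟩ | ⟨_, h'⟩ <;> rw [h] at h' <;> cases h'
      · exact Finset.mem_image.2 ⟨(u, v), mem_Fr.2 ⟨h2, h1, fun hF => ntg _ _ hF hQ.2⟩, rfl⟩
    have c1 := (Finset.card_le_card hsub).trans (Finset.card_image_le.trans (S.count Q))
    rw [card_tgt, Finset.card_singleton, one_mul] at c1
    have d1 : (Finset.univ.filter fun t' => Q (.s t')).card ≤ 1 := by
      refine Finset.card_le_one.2 fun a ha b hb => ?_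
      simp only [Finset.mem_filter, Finset.mem_univ, true_and, Q] at ha hb
      rw [← disj t a _ ha .refl, ← disj t b _ hb .refl]
    have d2 : (Finset.univ.filter fun t' => Q (.s' t')).card ≤ 1 := by
      refine Finset.card_le_one.2 fun a ha b hb => ?_
      simp only [Finset.mem_filter, Finset.mem_univ, true_and, Q] at ha hb
      rw [← disj t a _ ha (.single (S.hs a)), ← disj t b _ hb (.single (S.hs b))]
    have d3 : ∑ i, ((Finset.range (n i)).filter fun j => Q (.w i j)).card ≤ ∑ i ∈ I t, n i := by
      rw [Finset.sum_filter]
      refine Finset.sum_le_sum fun i _ => ?_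
      split_ifs with hi
      · simpa using Finset.card_filter_le (Finset.range (n i)) fun j => Q (.w i j)
      · rw [Nat.le_zero, Finset.card_eq_zero, Finset.filter_eq_empty_iff]
        intro j hj hQ
        exact hi (disj _ _ _ (hfw i j (Finset.mem_range.1 hj)) hQ)
    omega
  have s1 : ∑ t, (I t).card = 3 * m := by
    have := Finset.card_eq_sum_card_fiberwise (f := f) (s := Finset.univ) (t := Finset.univ)
      (fun _ _ => by simp)
    simpa [I] using this.symm
  have s2 : ∑ t, ∑ i ∈ I t, n i = m * B := by
    rw [← hsum]
    exact Finset.sum_fiberwise _ f n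
  have heq := (Finset.sum_eq_sum_iff_of_le hle).1 (by
    rw [Finset.sum_add_distrib, Finset.sum_add_distrib, s1, s2]
    simp only [Finset.sum_const, Finset.card_univ, Fintype.card_fin, smul_eq_mul]
    ring)
  refine ⟨f, fun t => ?_⟩
  have hB : 5 ≤ B := by
    have hm : 0 < m := by have := t.2; omega
    have h1 := hbound ⟨0, by omega⟩
    have h2 := hn ⟨0, by omega⟩
    omega
  have e := heq t (Finset.mem_univ t)
  have h3 := final_arith hdist hbound hB (I t) e
  exact ⟨h3, by change ∑ i ∈ I t, n i = B; omega⟩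

/-- For pairwise distinct positive integers `n_1, …, n_{3m}`
with `∑ n_i = m·B` and `B/4 < n_i < B/2`, the 3-Partition instance is solvable
iff the constructed MD-RSPP instance `(D,K,2)` is a YES-instance. -/
theorem threePartition_iff_mdrspp (m B : ℕ) (n : Fin (3 * m) → ℕ)
    (hdist : Function.Injective n) (hpos : ∀ i, 0 < n i)
    (hsum : ∑ i, n i = m * B)
    (hbound : ∀ i, B < 4 * n i ∧ 2 * n i < B) :
    ThreePartition m B n ↔
      ∃ H : Finset (Vtx m × Vtx m), RSPPSolution (hardD m B n) (hardK m B n) 2 H := by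
  have hb : ∀ i, n i < B := fun i => by have := hbound i; omega
  constructor
  · exact three_forward m B n hpos hb
  · rintro ⟨H, hH⟩
    exact three_backward m B n hdist hpos hsum hbound H hH
end

section
/- Let m, B ∈ ℕ and let n_1, …, n_{3m} be pairwise distinct positive integers with Σ_{i=1}^{3m} n_i = mB and B/4 < n_i < B/2 for all i ∈ [3m], and let (D,K) be the digraph and commodity set constructed from these data as described, where each commodity is routed along the unique directed path in D from its source to its destination. Then the integers n_1, …, n_{3m} can be partitioned into m triples each summing to B if and only if the resulting MD-SPP instance with target 2 is a YES-instance. -/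
open Relation

variable {V : Type*} [DecidableEq V]

theorem x_mem_s {m B n} (i : Fin m) : Vtx.s i ∈ mainPath m B n := by simp [mainPath]
theorem x_mem_s' {m B n} (i : Fin m) : Vtx.s' i ∈ mainPath m B n := by simp [mainPath]
theorem x_mem_w {m B} {n : Fin (3*m) → ℕ} (i : Fin (3*m)) (j : ℕ) :
    Vtx.w i j ∈ mainPath m B n ↔ j < n i := by simp [mainPath]
theorem x_mem_r {m B} {n : Fin (3*m) → ℕ} (i : Fin m) (j : ℕ) :
    Vtx.r i j ∈ mainPath m B n ↔ j < B := by simp [mainPath]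
theorem x_mem_wt {m B} {n : Fin (3*m) → ℕ} (i : Fin (3*m)) :
    Vtx.wt i ∉ mainPath m B n := by simp [mainPath]
theorem x_mem_rt {m B} {n : Fin (3*m) → ℕ} (i : Fin m) (j : ℕ) :
    Vtx.rt i j ∉ mainPath m B n := by simp [mainPath]
theorem x_mem_rb {m B} {n : Fin (3*m) → ℕ} (i : Fin m) (j : ℕ) :
    Vtx.rb i j ∉ mainPath m B n := by simp [mainPath]

theorem x_nodup (m B : ℕ) (n : Fin (3*m) → ℕ) : (mainPath m B n).Nodup := by
  unfold mainPath
  rw [List.nodup_append, List.nodup_append]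
  refine ⟨⟨?_, ?_, ?_⟩, ?_, ?_⟩
  · rw [List.nodup_flatMap]
    refine ⟨by simp, (List.nodup_finRange m).imp ?_⟩
    intro a b hab; simp [Function.onFun, hab, Ne.symm hab]
  · rw [List.nodup_flatMap]
    refine ⟨fun i _ => List.Nodup.map (fun a b h => by simpa using h) List.nodup_range, (List.nodup_finRange _).imp ?_⟩
    intro a b hab x; simp; rintro j hj rfl k hk; simp [Ne.symm hab]
  · simp only [List.mem_flatMap]; rintro a ⟨i, _, hi⟩ b ⟨k, _, hk⟩ rfl
    simp at hi hk; obtain ⟨j, _, rfl⟩ := hk; simp at hi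
  · rw [List.nodup_flatMap]
    refine ⟨fun i _ => List.Nodup.map (fun a b h => by simpa using h) List.nodup_range, (List.nodup_finRange _).imp ?_⟩
    intro a b hab x; simp; rintro j hj rfl k hk; simp [Ne.symm hab]
  · simp only [List.mem_append, List.mem_flatMap]; rintro a h b ⟨k, _, hk⟩ rfl
    simp at h hk; obtain ⟨j, _, rfl⟩ := hk; simp at h

theorem x_edge_iff {V : Type*} (l : List V) (u v : V) :
    (u, v) ∈ listEdges l ↔ [u, v] <:+: l := by
  induction l with
  | nil => simp [listEdges]
  | cons a l ih =>
    rw [List.infix_cons_iff, ← ih]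
    cases l with
    | nil => simp [listEdges]
    | cons b l => simp [listEdges, List.cons_prefix_cons]

theorem x_infix_flatMap {α β : Type*} (l : List α) (f : α → List β) (a : α) (h : a ∈ l) :
    f a <:+: l.flatMap f := by
  obtain ⟨s, t, rfl⟩ := List.append_of_mem h
  exact ⟨s.flatMap f, t.flatMap f, by simp⟩

theorem x_infix_range (j k : ℕ) (h : j + 1 < k) : [j, j+1] <:+: List.range k := by
  refine ⟨List.range j, List.range' (j+2) (k-(j+2)), ?_⟩
  have : k = j + (2 + (k - (j+2))) := by omega
  conv_rhs => rw [this, List.range_eq_range', ← List.range'_append_1, ← List.range'_append_1]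
  simp [List.range_eq_range', List.range']

section
variable {m B : ℕ} {n : Fin (3*m) → ℕ}

theorem x_D_main {u v : Vtx m} (h : [u, v] <:+: mainPath m B n) : (u, v) ∈ hardD m B n := by
  unfold hardD
  simp only [Finset.mem_union, List.mem_toFinset]
  exact Or.inl (Or.inl ((x_edge_iff _ _ _).2 h))

theorem x_D_ss (i : Fin m) : [Vtx.s i, Vtx.s' i] <:+: mainPath m B n := by
  unfold mainPath
  refine List.IsInfix.trans ?_ (List.prefix_append _ _).isInfix
  refine List.IsInfix.trans ?_ (List.prefix_append _ _).isInfix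
  exact x_infix_flatMap _ (fun i => [Vtx.s i, Vtx.s' i]) i (by simp)

theorem x_D_ww (i : Fin (3*m)) (j : ℕ) (h : j + 1 < n i) :
    [Vtx.w i j, Vtx.w i (j+1)] <:+: mainPath m B n := by
  unfold mainPath
  refine List.IsInfix.trans ?_ (List.prefix_append _ _).isInfix
  refine List.IsInfix.trans ?_ (List.suffix_append _ _).isInfix
  refine List.IsInfix.trans ?_ (x_infix_flatMap _ _ i (by simp))
  exact (x_infix_range j (n i) h).map (fun j => Vtx.w i j)

theorem x_D_wt (i : Fin (3*m)) : (Vtx.w i (n i - 1), Vtx.wt i) ∈ hardD m B n := by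
  simp [hardD]
theorem x_D_rt (i : Fin m) (j : ℕ) (h : j < B) : (Vtx.r i j, Vtx.rt i j) ∈ hardD m B n := by
  simp [hardD, h]
theorem x_D_rb (i : Fin m) (j : ℕ) (h : j < B) : (Vtx.r i j, Vtx.rb i j) ∈ hardD m B n := by
  simp [hardD, h]

theorem x_infix_pos {V : Type*} [DecidableEq V] {L : List V} (hL : L.Nodup) {u v : V}
    (h : [u, v] <:+: L) : u ∈ L ∧ v ∈ L ∧ L.idxOf v = L.idxOf u + 1 := by
  obtain ⟨s, t, rfl⟩ := h
  refine ⟨by simp, by simp, ?_⟩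
  simp only [List.append_assoc, List.cons_append, List.nil_append] at hL ⊢
  rw [List.nodup_append] at hL
  obtain ⟨_, h2, h3⟩ := hL
  have hu : u ∉ s := fun h => h3 u h u (by simp) rfl
  have hv : v ∉ s := fun h => h3 v h v (by simp) rfl
  have huv : u ≠ v := by rintro rfl; simp at h2
  rw [List.idxOf_append_of_notMem hu, List.idxOf_append_of_notMem hv]
  simp [List.idxOf_cons_ne _ huv]

/-- vertices that are the heads of edges -/
def XV (m B : ℕ) (n : Fin (3*m) → ℕ) (v : Vtx m) : Prop :=
  match v with
  | .s _ => True
  | .s' _ => True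
  | .w i j => j < n i
  | .wt _ => True
  | .r _ j => j < B
  | .rt _ j => j < B
  | .rb _ j => j < B

theorem x_XV_of_mem {v : Vtx m} (h : v ∈ mainPath m B n) : XV m B n v := by
  cases v <;> simp_all [XV, mainPath]

theorem x_D_cases (hpos : ∀ i, 0 < n i) {u v : Vtx m} (h : (u, v) ∈ hardD m B n) :
    u ∈ mainPath m B n ∧ XV m B n v ∧
    ((v ∈ mainPath m B n ∧ (mainPath m B n).idxOf v = (mainPath m B n).idxOf u + 1)
      ∨ v ∉ mainPath m B n) := by
  unfold hardD at h
  simp only [Finset.mem_union, List.mem_toFinset] at h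
  rcases h with (h | h) | h
  · obtain ⟨h1, h2, h3⟩ := x_infix_pos (x_nodup m B n) ((x_edge_iff _ _ _).1 h)
    exact ⟨h1, x_XV_of_mem h2, Or.inl ⟨h2, h3⟩⟩
  · simp at h
    obtain ⟨i, rfl, rfl⟩ := h
    exact ⟨(x_mem_w _ _).2 (by have := hpos i; omega), trivial, Or.inr (x_mem_wt _)⟩
  · simp at h
    obtain ⟨i, j, hj, ⟨rfl, rfl⟩ | ⟨rfl, rfl⟩⟩ := h
    · exact ⟨(x_mem_r _ _).2 hj, hj, Or.inr (x_mem_rt _ _)⟩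
    · exact ⟨(x_mem_r _ _).2 hj, hj, Or.inr (x_mem_rb _ _)⟩

theorem x_pos_lt_sw {u v : Vtx m} (hu : ∃ t, u = Vtx.s t ∨ u = Vtx.s' t) {i j} (hv : v = Vtx.w i j)
    (hj : j < n i) : (mainPath m B n).idxOf u < (mainPath m B n).idxOf v := by
  subst hv
  unfold mainPath
  rw [List.append_assoc, List.idxOf_append_of_mem, List.idxOf_append_of_notMem (by simp)]
  · refine lt_of_lt_of_le (List.idxOf_lt_length_of_mem ?_) (Nat.le_add_right _ _)
    rcases hu with ⟨t, rfl | rfl⟩ <;> simp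
  · rcases hu with ⟨t, rfl | rfl⟩ <;> simp

theorem x_pos_lt_r {u : Vtx m} (hu : (∃ t, u = Vtx.s t) ∨ ∃ i j, u = Vtx.w i j ∧ j < n i) {i k} :
    (mainPath m B n).idxOf u < (mainPath m B n).idxOf (Vtx.r i k) := by
  unfold mainPath
  rw [List.idxOf_append_of_notMem (a := Vtx.r i k) (by simp), List.idxOf_append_of_mem]
  · refine lt_of_lt_of_le (List.idxOf_lt_length_of_mem ?_) (Nat.le_add_right _ _)
    rcases hu with ⟨t, rfl⟩ | ⟨i, j, rfl, hj⟩ <;> simp_all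
  · rcases hu with ⟨t, rfl⟩ | ⟨i, j, rfl, hj⟩ <;> simp_all

end

section
variable {m B : ℕ} {n : Fin (3*m) → ℕ}

theorem x_sublist_aux (hpos : ∀ i, 0 < n i) (v : Vtx m) (hv : v ∈ mainPath m B n) :
    ∀ (P : List (Vtx m)) (u : Vtx m), (u :: P).IsChain (Adj (hardD m B n)) →
      (u :: P).getLast? = some v → ∀ l : List (Vtx m),
      (∀ x ∈ l, x ∈ mainPath m B n ∧ (mainPath m B n).idxOf u ≤ (mainPath m B n).idxOf x ∧
        (mainPath m B n).idxOf x ≤ (mainPath m B n).idxOf v) →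
      l.Pairwise (fun a b => (mainPath m B n).idxOf a < (mainPath m B n).idxOf b) →
      l.Sublist (u :: P) := by
  intro P
  induction P with
  | nil =>
    intro u _ hl l hx hp
    simp at hl
    subst hl
    have : ∀ x ∈ l, x = u := fun x h => (List.idxOf_inj (hx x h).1).1
      (le_antisymm (hx x h).2.2 (hx x h).2.1)
    match l, hp, this with
    | [], _, _ => simp
    | [a], _, h => simp [h a (by simp)]
    | a :: b :: l, hp, h =>
      exfalso
      have h1 := h a (by simp)
      have h2 := h b (by simp)
      subst h1; subst h2
      simp at hp
  | cons y P ih =>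
    intro u hc hl l hx hp
    rw [List.isChain_cons_cons] at hc
    obtain ⟨huy, hc⟩ := hc
    obtain ⟨hu, -, h⟩ := x_D_cases hpos huy
    rw [List.getLast?_cons_cons] at hl
    rcases h with ⟨hy, hpy⟩ | hy
    · match l, hx, hp with
      | [], _, _ => simp
      | a :: l, hx, hp =>
        by_cases hau : a = u
        · subst hau
          rw [List.pairwise_cons] at hp
          refine (ih y hc hl l (fun x hxl => ?_) hp.2).cons_cons a
          have h1 := hx x (by simp [hxl])
          have h2 := hp.1 x hxl
          exact ⟨h1.1, by omega, h1.2.2⟩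
        · refine (ih y hc hl (a :: l) (fun x hxl => ?_) hp).cons u
          have h1 := hx x hxl
          have h0 := hx a (by simp)
          have h2 : (mainPath m B n).idxOf u ≠ (mainPath m B n).idxOf a :=
            fun h => hau ((List.idxOf_inj hu).1 h).symm
          refine ⟨h1.1, ?_, h1.2.2⟩
          rcases List.mem_cons.1 hxl with rfl | hxl'
          · omega
          · have := (List.pairwise_cons.1 hp).1 x hxl'
            omega
    · exfalso
      match P, hc, hl with
      | [], _, hl => simp at hl; subst hl; exact hy hv
      | z :: P, hc, _ =>
        rw [List.isChain_cons_cons] at hc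
        exact hy (x_D_cases hpos hc.1).1

theorem x_pair_sublist {A : Vtx m → Vtx m → Prop} {u v : Vtx m} {P : List (Vtx m)} (huv : u ≠ v)
    (h : DiPath A u v P) : [u, v].Sublist P := by
  obtain ⟨-, -, h1, h2⟩ := h
  match P, h1 with
  | a :: P, h1 =>
    simp at h1; subst h1
    refine List.Sublist.cons_cons _ ?_
    rw [List.singleton_sublist]
    have := List.mem_of_getLast? h2
    rcases List.mem_cons.1 this with h | h
    · exact absurd h.symm huv
    · exact h

theorem x_pair_path {H : Finset (Vtx m × Vtx m)} {u v : Vtx m} (huv : u ≠ v) (h : (u, v) ∈ H) :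
    DiPath (Adj H) u v [u, v] := by
  refine ⟨?_, by simp [huv], by simp, by simp⟩
  show List.IsChain _ _
  simpa [Adj] using h

/-- increasing edges of H within the main path -/
def XR (m B : ℕ) (n : Fin (3*m) → ℕ) (H : Finset (Vtx m × Vtx m)) (u v : Vtx m) : Prop :=
  (u, v) ∈ H ∧ u ∈ mainPath m B n ∧ v ∈ mainPath m B n ∧
    (mainPath m B n).idxOf u < (mainPath m B n).idxOf v

theorem x_path_of_R {H : Finset (Vtx m × Vtx m)} {u v : Vtx m} (hu : u ∈ mainPath m B n)
    (h : ReflTransGen (XR m B n H) u v) :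
    ∃ l, DiPath (Adj H) u v l ∧
      l.Pairwise (fun a b => (mainPath m B n).idxOf a < (mainPath m B n).idxOf b) ∧
      ∀ x ∈ l, x ∈ mainPath m B n ∧ (mainPath m B n).idxOf u ≤ (mainPath m B n).idxOf x ∧
        (mainPath m B n).idxOf x ≤ (mainPath m B n).idxOf v := by
  induction h with
  | refl => exact ⟨[u], ⟨List.isChain_singleton u, by simp, by simp, by simp⟩, by simp, by simp [hu]⟩
  | tail hab hbc ih =>
    rename_i b c
    obtain ⟨l, ⟨h1, h2, h3, h4⟩, h5, h6⟩ := ih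
    have hne : l ≠ [] := by rintro rfl; simp at h3
    have hlt : ∀ x ∈ l, (mainPath m B n).idxOf x < (mainPath m B n).idxOf c := fun x hx =>
      lt_of_le_of_lt (h6 x hx).2.2 hbc.2.2.2
    have hpw : (l ++ [c]).Pairwise
        (fun a b => (mainPath m B n).idxOf a < (mainPath m B n).idxOf b) := by
      rw [List.pairwise_append]
      exact ⟨h5, by simp, by simpa using hlt⟩
    refine ⟨l ++ [c], ⟨?_, ?_, ?_, by simp⟩, hpw, ?_⟩
    · have : (l ++ [c]).IsChain (Adj H) := by
        rw [List.isChain_append]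
        refine ⟨h1, by simp, ?_⟩
        intro x hx y hy
        rw [h4] at hx
        simp at hx hy
        subst hx; subst hy
        exact hbc.1
      exact this
    · exact hpw.imp (fun h he => by subst he; exact lt_irrefl _ h)
    · rw [List.head?_append, h3]; rfl
    · intro x hx
      rcases List.mem_append.1 hx with hx | hx
      · have := h6 x hx
        exact ⟨this.1, this.2.1, (hlt x hx).le⟩
      · simp at hx; subst hx
        refine ⟨hbc.2.2.1, ?_, le_rfl⟩
        have : u ∈ l := List.mem_of_head? h3
        exact (hlt u this).le

theorem x_solve (hpos : ∀ i, 0 < n i) {H : Finset (Vtx m × Vtx m)} {u v : Vtx m}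
    (hu : u ∈ mainPath m B n) (hv : v ∈ mainPath m B n)
    (h : ReflTransGen (XR m B n H) u v) {P : List (Vtx m)}
    (hP : DiPath (Adj (hardD m B n)) u v P) :
    ∃ l, DiPath (Adj H) u v l ∧ l.Sublist P := by
  obtain ⟨l, h1, h2, h3⟩ := x_path_of_R hu h
  refine ⟨l, h1, ?_⟩
  obtain ⟨p1, -, p3, p4⟩ := hP
  match P, p3 with
  | a :: P, p3 =>
    simp at p3; subst p3
    exact x_sublist_aux hpos v hv P _ p1 p4 l h3 h2

/-- the segment of the main path -/
theorem x_seg : ∀ (d : ℕ) (u v : Vtx m), u ∈ mainPath m B n → v ∈ mainPath m B n →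
    (mainPath m B n).idxOf v = (mainPath m B n).idxOf u + d →
    ReflTransGen (XR m B n (hardD m B n)) u v := by
  intro d
  induction d with
  | zero => intro u v hu hv h; rw [(List.idxOf_inj hv).1 h]
  | succ d ih =>
    intro u v hu hv h
    have hl := List.idxOf_lt_length_of_mem hv
    have hk : (mainPath m B n).idxOf u + d < (mainPath m B n).length := by omega
    have hk' : (mainPath m B n).idxOf u + d + 1 < (mainPath m B n).length := by omega
    have hi : (mainPath m B n).idxOf (mainPath m B n)[(mainPath m B n).idxOf u + d] =
      (mainPath m B n).idxOf u + d := (x_nodup m B n).idxOf_getElem _ _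
    refine (ih u ((mainPath m B n)[(mainPath m B n).idxOf u + d]) hu (List.getElem_mem _) hi).tail ?_
    have hv' : v = (mainPath m B n)[(mainPath m B n).idxOf u + d + 1] := by
      have := List.getElem_idxOf hl
      rw [← this]; congr 1
    refine ⟨x_D_main ?_, List.getElem_mem _, hv, by omega⟩
    rw [← x_edge_iff, hv', listEdges, List.mem_iff_getElem]
    refine ⟨(mainPath m B n).idxOf u + d, by simp; omega, by simp⟩

theorem x_reach {u v : Vtx m} (hu : u ∈ mainPath m B n) (hv : v ∈ mainPath m B n)
    (h : (mainPath m B n).idxOf u < (mainPath m B n).idxOf v) :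
    ReflTransGen (XR m B n (hardD m B n)) u v :=
  x_seg ((mainPath m B n).idxOf v - (mainPath m B n).idxOf u) u v hu hv (by omega)

end

section
variable {m B : ℕ} {n : Fin (3*m) → ℕ}

theorem x_fwd (hpos : ∀ i, 0 < n i)
    (Kspp : Finset (Vtx m × Vtx m × List (Vtx m)))
    (hKspp : ∀ k : Vtx m × Vtx m × List (Vtx m),
      k ∈ Kspp ↔ ((k.1, k.2.1) ∈ hardK m B n ∧
        DiPath (Adj (hardD m B n)) k.1 k.2.1 k.2.2))
    (h : ThreePartition m B n) :
    ∃ H : Finset (Vtx m × Vtx m), SPPSolution (hardD m B n) Kspp 2 H := by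
  classical
  obtain ⟨f, hf⟩ := h
  -- enumerate triples
  have hg : ∀ t, ∃ a b c, ∀ i, f i = t ↔ (i = a ∨ i = b ∨ i = c) := by
    intro t
    obtain ⟨a, b, c, -, -, -, h⟩ := Finset.card_eq_three.1 (hf t).1
    refine ⟨a, b, c, fun i => ?_⟩
    have := congrArg (i ∈ ·) h
    simpa using this
  choose g0 g1 g2 hg using hg
  -- slots
  have hh : ∃ h : Fin (3*m) → ℕ → ℕ, (∀ i j, j < n i → h i j < B) ∧
      ∀ t k, k < B → ∃ i j, f i = t ∧ j < n i ∧ h i j = k := by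
    have he : ∀ t, Nonempty ((Σ i : {i // f i = t}, Fin (n i)) ≃ Fin B) := by
      intro t
      refine ⟨Fintype.equivOfCardEq ?_⟩
      simp only [Fintype.card_sigma, Fintype.card_fin]
      rw [← (hf t).2]
      exact (Finset.sum_subtype _ (by simp) _).symm
    refine ⟨fun i j => if hj : j < n i then ((he (f i)).some ⟨⟨i, rfl⟩, ⟨j, hj⟩⟩ : ℕ) else 0,
      ?_, ?_⟩
    · intro i j hj
      simp only [hj, dif_pos]
      exact Fin.is_lt _
    · intro t k hk
      obtain ⟨⟨⟨i, hi⟩, ⟨j, hj⟩⟩, hx⟩ := (he t).some.surjective ⟨k, hk⟩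
      refine ⟨i, j, hi, hj, ?_⟩
      subst hi
      simp only [hj, dif_pos]
      rw [hx]
  obtain ⟨h, hB, hsurj⟩ := hh
  let c1 : Vtx m → Vtx m := fun v => match v with
    | .s t => .s' t
    | .s' t => .w (g0 t) 0
    | .w i j => if j + 1 < n i then .w i (j+1) else .wt i
    | .r i j => .rt i j
    | v => v
  let c2 : Vtx m → Vtx m := fun v => match v with
    | .s t => .w (g2 t) 0
    | .s' t => .w (g1 t) 0
    | .w i j => .r (f i) (h i j)
    | .r i j => .rb i j
    | v => v
  let F := (mainPath m B n).toFinset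
  let H : Finset (Vtx m × Vtx m) := F.image (fun v => (v, c1 v)) ∪ F.image (fun v => (v, c2 v))
  have hH1 : ∀ u ∈ mainPath m B n, (u, c1 u) ∈ H := by
    intro u hu
    exact Finset.mem_union_left _ (Finset.mem_image.2 ⟨u, List.mem_toFinset.2 hu, rfl⟩)
  have hH2 : ∀ u ∈ mainPath m B n, (u, c2 u) ∈ H := by
    intro u hu
    exact Finset.mem_union_right _ (Finset.mem_image.2 ⟨u, List.mem_toFinset.2 hu, rfl⟩)
  have hHc : ∀ e ∈ H, e.1 ∈ mainPath m B n ∧ (e.2 = c1 e.1 ∨ e.2 = c2 e.1) := by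
    intro e he
    rcases Finset.mem_union.1 he with he | he <;>
    · obtain ⟨u, hu, rfl⟩ := Finset.mem_image.1 he
      exact ⟨List.mem_toFinset.1 hu, by simp⟩
  have key : ∀ u ∈ mainPath m B n, ∀ v, (v = c1 u ∨ v = c2 u) → (u, v) ∈ hardD m B n ∨
      (v ∈ mainPath m B n ∧ (mainPath m B n).idxOf u < (mainPath m B n).idxOf v) := by
    intro u hu v hv
    cases u with
    | s t =>
      rcases hv with rfl | rfl
      · exact Or.inl (x_D_main (x_D_ss t))
      · exact Or.inr ⟨(x_mem_w _ _).2 (hpos _), x_pos_lt_sw ⟨t, Or.inl rfl⟩ rfl (hpos _)⟩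
    | s' t =>
      rcases hv with rfl | rfl
      · exact Or.inr ⟨(x_mem_w _ _).2 (hpos _), x_pos_lt_sw ⟨t, Or.inr rfl⟩ rfl (hpos _)⟩
      · exact Or.inr ⟨(x_mem_w _ _).2 (hpos _), x_pos_lt_sw ⟨t, Or.inr rfl⟩ rfl (hpos _)⟩
    | w i j =>
      have hj := (x_mem_w _ _).1 hu
      rcases hv with rfl | rfl
      · left
        by_cases hj' : j + 1 < n i
        · simp only [c1, hj', if_true]
          exact x_D_main (x_D_ww i j hj')
        · simp only [c1, hj', if_false]
          obtain rfl : j = n i - 1 := by omega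
          exact x_D_wt i
      · exact Or.inr ⟨(x_mem_r _ _).2 (hB i j hj), x_pos_lt_r (Or.inr ⟨i, j, rfl, hj⟩)⟩
    | r i j =>
      have hj := (x_mem_r _ _).1 hu
      rcases hv with rfl | rfl
      · exact Or.inl (x_D_rt i j hj)
      · exact Or.inl (x_D_rb i j hj)
    | wt i => exact absurd hu (x_mem_wt _)
    | rt i j => exact absurd hu (x_mem_rt _ _)
    | rb i j => exact absurd hu (x_mem_rb _ _)
  have hR : ∀ u v, u ∈ mainPath m B n → v ∈ mainPath m B n → (v = c1 u ∨ v = c2 u) →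
      XR m B n H u v := by
    intro u v hu hv huv
    refine ⟨?_, hu, hv, ?_⟩
    · rcases huv with rfl | rfl
      · exact hH1 u hu
      · exact hH2 u hu
    · rcases key u hu v huv with h | h
      · rcases (x_D_cases hpos h).2.2 with h | h
        · omega
        · exact absurd hv h
      · exact h.2
  have hw : ∀ i j, j < n i → ReflTransGen (XR m B n H) (.w i 0) (.w i j) := by
    intro i j
    induction j with
    | zero => intro _; exact .refl
    | succ j ih =>
      intro hj
      refine (ih (by omega)).tail (hR _ _ ((x_mem_w _ _).2 (by omega)) ((x_mem_w _ _).2 hj) ?_)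
      left; simp [c1, hj]
  have hs : ∀ i, ReflTransGen (XR m B n H) (.s (f i)) (.w i 0) := by
    intro i
    have hs' : XR m B n H (.s (f i)) (.s' (f i)) := hR _ _ (x_mem_s _) (x_mem_s' _) (Or.inl rfl)
    have hwm : ∀ i, Vtx.w i 0 ∈ mainPath m B n := fun i => (x_mem_w _ _).2 (hpos i)
    rcases (hg (f i) i).1 rfl with h | h | h
    · refine (ReflTransGen.single hs').tail (hR _ _ (x_mem_s' _) (hwm _) (Or.inl ?_))
      simp only [c1]; rw [← h]
    · refine (ReflTransGen.single hs').tail (hR _ _ (x_mem_s' _) (hwm _) (Or.inr ?_))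
      simp only [c2]; rw [← h]
    · refine ReflTransGen.single (hR _ _ (x_mem_s _) (hwm _) (Or.inr ?_))
      simp only [c2]; rw [← h]
  refine ⟨H, ?_, ?_, ?_⟩
  · intro e he
    obtain ⟨h1, h2⟩ := hHc e he
    rcases key _ h1 _ h2 with hk | hk
    · refine ⟨?_, ReflTransGen.single hk⟩
      intro heq
      rcases (x_D_cases hpos hk).2.2 with h | h
      · rw [heq] at h; omega
      · exact h (heq ▸ h1)
    · refine ⟨fun heq => ?_, ?_⟩
      · rw [heq] at hk; omega
      · exact ReflTransGen.mono (r := XR m B n (hardD m B n)) (fun a b h => h.1) _ _ (x_reach h1 hk.1 hk.2)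
  · intro v
    unfold outDeg
    refine le_trans (Finset.card_le_card (t := {(v, c1 v), (v, c2 v)}) ?_) Finset.card_le_two
    intro e he
    rw [Finset.mem_filter] at he
    obtain ⟨he, rfl⟩ := he
    rcases (hHc e he).2 with h | h
    · simp [← h]
    · simp [← h]
  · rintro ⟨a, b, P⟩ hk
    obtain ⟨hk, hP⟩ := (hKspp _).1 hk
    simp only at hk hP ⊢
    have pair : a ≠ b → (a, b) ∈ H → ∃ l, DiPath (Adj H) a b l ∧ l.Sublist P := fun hne hab =>
      ⟨[a, b], x_pair_path hne hab, x_pair_sublist hne hP⟩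
    simp only [hardK, List.mem_toFinset, List.mem_append, List.mem_map, List.mem_flatMap,
      List.mem_finRange, List.mem_range, true_and, List.mem_cons, Prod.mk.injEq, List.not_mem_nil,
      or_false] at hk
    rcases hk with (((⟨i, rfl, rfl⟩ | ⟨i, j, hj, rfl, rfl⟩) | ⟨i, j, hj, rfl, rfl⟩) |
      ⟨i, rfl, rfl⟩) | ⟨i, j, hj, ⟨rfl, rfl⟩ | ⟨rfl, rfl⟩⟩
    · exact pair (by simp) (hH1 _ (x_mem_s i))
    · obtain ⟨i', k, rfl, hkn, rfl⟩ := hsurj i j hj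
      refine x_solve hpos (x_mem_s _) ((x_mem_r _ _).2 hj) ?_ hP
      exact ((hs i').trans (hw i' k hkn)).tail
        (hR _ _ ((x_mem_w _ _).2 hkn) ((x_mem_r _ _).2 hj) (Or.inr rfl))
    · refine pair (by simp) ?_
      have := hH1 (.w i j) ((x_mem_w _ _).2 (by omega))
      simpa [c1, show j + 1 < n i by omega] using this
    · refine pair (by simp) ?_
      have hp := hpos i
      have := hH1 (.w i (n i - 1)) ((x_mem_w _ _).2 (by omega))
      simpa [c1, show ¬ (n i - 1 + 1 < n i) by omega] using this
    · exact pair (by simp) (hH1 (.r i j) ((x_mem_r _ _).2 hj))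
    · exact pair (by simp) (hH2 (.r i j) ((x_mem_r _ _).2 hj))

end

section
variable {m B : ℕ} {n : Fin (3*m) → ℕ}

/-- index type of vertices -/
abbrev XI (m B : ℕ) (n : Fin (3*m) → ℕ) : Type :=
  Fin m ⊕ Fin m ⊕ (Σ i : Fin (3*m), Fin (n i)) ⊕ Fin (3*m) ⊕
    (Fin m × Fin B) ⊕ (Fin m × Fin B) ⊕ (Fin m × Fin B)

def xphi (m B : ℕ) (n : Fin (3*m) → ℕ) : XI m B n → Vtx m
  | .inl t => .s t
  | .inr (.inl t) => .s' t
  | .inr (.inr (.inl ⟨i, j⟩)) => .w i j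
  | .inr (.inr (.inr (.inl i))) => .wt i
  | .inr (.inr (.inr (.inr (.inl (t, k))))) => .r t k
  | .inr (.inr (.inr (.inr (.inr (.inl (t, k)))))) => .rt t k
  | .inr (.inr (.inr (.inr (.inr (.inr (t, k)))))) => .rb t k

theorem xphi_inj : Function.Injective (xphi m B n) := by
  rintro (a | a | ⟨a, j⟩ | a | ⟨a, k⟩ | ⟨a, k⟩ | ⟨a, k⟩) (b | b | ⟨b, l⟩ | b | ⟨b, l⟩ | ⟨b, l⟩ | ⟨b, l⟩) h <;>
    simp [xphi] at h <;> (try subst h) <;> (try simp)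
  · obtain ⟨rfl, h⟩ := h
    have := Fin.ext h
    subst this; simp
  all_goals exact ⟨h.1, Fin.ext h.2⟩

def XF (m B : ℕ) (n : Fin (3*m) → ℕ) : Finset (Vtx m) := Finset.univ.image (xphi m B n)

theorem x_mem_XF (v : Vtx m) : v ∈ XF m B n ↔ XV m B n v := by
  simp only [XF, Finset.mem_image, Finset.mem_univ, true_and]
  constructor
  · rintro ⟨a | a | ⟨a, j⟩ | a | ⟨a, k⟩ | ⟨a, k⟩ | ⟨a, k⟩, rfl⟩ <;> simp [xphi, XV]
  · intro h
    cases v with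
    | s t => exact ⟨.inl t, rfl⟩
    | s' t => exact ⟨.inr (.inl t), rfl⟩
    | w i j => exact ⟨.inr (.inr (.inl ⟨i, ⟨j, h⟩⟩)), rfl⟩
    | wt i => exact ⟨.inr (.inr (.inr (.inl i))), rfl⟩
    | r t k => exact ⟨.inr (.inr (.inr (.inr (.inl (t, ⟨k, h⟩))))), rfl⟩
    | rt t k => exact ⟨.inr (.inr (.inr (.inr (.inr (.inl (t, ⟨k, h⟩)))))), rfl⟩
    | rb t k => exact ⟨.inr (.inr (.inr (.inr (.inr (.inr (t, ⟨k, h⟩)))))), rfl⟩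

theorem x_count (p : Vtx m → Prop) [DecidablePred p] : ((XF m B n).filter p).card =
    (∑ t : Fin m, if p (.s t) then 1 else 0) + ((∑ t : Fin m, if p (.s' t) then 1 else 0) +
    ((∑ i : Fin (3*m), ∑ j : Fin (n i), if p (.w i j) then 1 else 0) +
    ((∑ i : Fin (3*m), if p (.wt i) then 1 else 0) +
    ((∑ t : Fin m, ∑ k : Fin B, if p (.r t k) then 1 else 0) +
    ((∑ t : Fin m, ∑ k : Fin B, if p (.rt t k) then 1 else 0) +
    (∑ t : Fin m, ∑ k : Fin B, if p (.rb t k) then 1 else 0)))))) := by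
  rw [Finset.card_filter, XF, Finset.sum_image (fun a _ b _ h => xphi_inj h)]
  simp only [Fintype.sum_sum_type, Fintype.sum_sigma, Fintype.sum_prod_type, xphi]
  rfl

theorem x_cnt {H : Finset (Vtx m × Vtx m)} (hdeg : ∀ v, outDeg H v ≤ 2)
    (hL : ∀ u v, (u, v) ∈ H → u ∈ mainPath m B n) (P : Vtx m → Prop) [DecidablePred P]
    (hP : ∀ v, XV m B n v → P v → (∀ t, v ≠ .s t) → ∃ u, (u, v) ∈ H ∧ P u) :
    ((XF m B n).filter (fun v => P v ∧ ∀ t, v ≠ .s t)) ⊆ (H.filter (fun e => P e.1)).image Prod.snd ∧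
    (H.filter (fun e => P e.1)).card ≤
      2 * ((XF m B n).filter (fun v => P v ∧ v ∈ mainPath m B n)).card := by
  constructor
  · intro v hv
    rw [Finset.mem_filter, x_mem_XF] at hv
    obtain ⟨u, h1, h2⟩ := hP v hv.1 hv.2.1 hv.2.2
    exact Finset.mem_image.2 ⟨(u, v), Finset.mem_filter.2 ⟨h1, h2⟩, rfl⟩
  · skip
    refine Finset.card_le_mul_card_image_of_maps_to (f := (Prod.fst : Vtx m × Vtx m → Vtx m)) ?_ 2 ?_
    · rintro ⟨u, v⟩ he
      rw [Finset.mem_filter] at he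
      rw [Finset.mem_filter, x_mem_XF]
      have := hL u v he.1
      exact ⟨x_XV_of_mem this, he.2, this⟩
    · intro v _
      refine le_trans (Finset.card_le_card ?_) (hdeg v)
      intro e he
      simp only [Finset.mem_filter] at he ⊢
      exact ⟨he.1.1, he.2⟩

theorem x_count1 (P : Vtx m → Prop) [DecidablePred P] :
    ((XF m B n).filter (fun v => P v ∧ ∀ t, v ≠ .s t)).card =
    ((∑ t : Fin m, if P (.s' t) then 1 else 0) +
    ((∑ i : Fin (3*m), ∑ j : Fin (n i), if P (.w i j) then 1 else 0) +
    ((∑ i : Fin (3*m), if P (.wt i) then 1 else 0) +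
    ((∑ t : Fin m, ∑ k : Fin B, if P (.r t k) then 1 else 0) +
    ((∑ t : Fin m, ∑ k : Fin B, if P (.rt t k) then 1 else 0) +
    (∑ t : Fin m, ∑ k : Fin B, if P (.rb t k) then 1 else 0)))))) := by
  rw [x_count]
  simp

theorem x_count2 (P : Vtx m → Prop) [DecidablePred P] :
    ((XF m B n).filter (fun v => P v ∧ v ∈ mainPath m B n)).card =
    (∑ t : Fin m, if P (.s t) then 1 else 0) + ((∑ t : Fin m, if P (.s' t) then 1 else 0) +
    ((∑ i : Fin (3*m), ∑ j : Fin (n i), if P (.w i j) then 1 else 0) +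
    (∑ t : Fin m, ∑ k : Fin B, if P (.r t k) then 1 else 0))) := by
  rw [x_count]
  simp [x_mem_s, x_mem_s', x_mem_w, x_mem_wt, x_mem_r, x_mem_rt, x_mem_rb]

theorem x_arith (hdist : Function.Injective n) (h2 : ∀ i, 2 ≤ n i)
    (hbound : ∀ i, B < 4 * n i ∧ 2 * n i < B) (hm : 0 < m) (S : Finset (Fin (3*m)))
    (h : B + S.card = 3 + ∑ i ∈ S, n i) : S.card = 3 ∧ ∑ i ∈ S, n i = B := by
  have hB : 5 ≤ B := by
    have := h2 ⟨0, by omega⟩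
    have := (hbound ⟨0, by omega⟩).2
    omega
  suffices S.card = 3 by exact ⟨this, by omega⟩
  rcases lt_trichotomy S.card 3 with hc | hc | hc
  · exfalso
    interval_cases hS : S.card
    · rw [Finset.card_eq_zero] at hS; subst hS; simp at h; omega
    · obtain ⟨a, rfl⟩ := Finset.card_eq_one.1 hS
      have := hbound a
      simp at h; omega
    · obtain ⟨a, b, hab, rfl⟩ := Finset.card_eq_two.1 hS
      have h1 := hbound a
      have h3 := hbound b
      have : n a ≠ n b := fun h => hab (hdist h)
      rw [Finset.sum_pair hab] at h; omega
  · exact hc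
  · exfalso
    obtain ⟨a, b, c, ha, hb, -, hab, -, -⟩ := Finset.two_lt_card_iff.1 (show 2 < S.card by omega)
    have hne : n a ≠ n b := fun h => hab (hdist h)
    have hlt : ∑ i ∈ S, (B + 1) < ∑ i ∈ S, 4 * n i := by
      refine Finset.sum_lt_sum (fun i _ => (hbound i).1) ?_
      rcases lt_or_gt_of_ne hne with h' | h'
      · exact ⟨b, hb, by have := (hbound a).1; omega⟩
      · exact ⟨a, ha, by have := (hbound b).1; omega⟩
    rw [← Finset.mul_sum, Finset.sum_const, smul_eq_mul] at hlt
    obtain ⟨d, hd⟩ : ∃ d, S.card = d + 4 := ⟨S.card - 4, by omega⟩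
    rw [hd] at hlt h
    nlinarith [Nat.zero_le d]

theorem x_two_le (hdist : Function.Injective n) (hpos : ∀ i, 0 < n i)
    (hbound : ∀ i, B < 4 * n i ∧ 2 * n i < B) (i : Fin (3*m)) : 2 ≤ n i := by
  by_contra hc
  have h0 := hpos i
  have hi := i.2
  obtain ⟨j, hj⟩ : ∃ j : Fin (3*m), j ≠ i := by
    by_cases h : i.1 = 0
    · exact ⟨⟨1, by omega⟩, fun h' => by simp [← h'] at h⟩
    · exact ⟨⟨0, by omega⟩, fun h' => by simp [← h'] at h⟩
  refine hj (hdist ?_)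
  have := hbound i
  have := hbound j
  omega

theorem x_forced (Kspp : Finset (Vtx m × Vtx m × List (Vtx m)))
    (hKspp : ∀ k : Vtx m × Vtx m × List (Vtx m),
      k ∈ Kspp ↔ ((k.1, k.2.1) ∈ hardK m B n ∧
        DiPath (Adj (hardD m B n)) k.1 k.2.1 k.2.2))
    (H : Finset (Vtx m × Vtx m))
    (hH : ∀ k ∈ Kspp, ∃ l, DiPath (Adj H) k.1 k.2.1 l ∧ l.Sublist k.2.2)
    {a b : Vtx m} (hne : a ≠ b) (hK : (a, b) ∈ hardK m B n) (hD : (a, b) ∈ hardD m B n) :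
    (a, b) ∈ H := by
  obtain ⟨l, hl, hs⟩ := hH (a, b, [a, b]) ((hKspp _).2 ⟨hK, x_pair_path hne hD⟩)
  have := (x_pair_sublist hne hl)
  have he := hs.antisymm this
  simp only at he hl
  subst he
  have hc : List.IsChain (Adj H) [a, b] := hl.1
  simpa [Adj] using hc

theorem x_reachH (Kspp : Finset (Vtx m × Vtx m × List (Vtx m)))
    (hKspp : ∀ k : Vtx m × Vtx m × List (Vtx m),
      k ∈ Kspp ↔ ((k.1, k.2.1) ∈ hardK m B n ∧
        DiPath (Adj (hardD m B n)) k.1 k.2.1 k.2.2))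
    (H : Finset (Vtx m × Vtx m))
    (hH : ∀ k ∈ Kspp, ∃ l, DiPath (Adj H) k.1 k.2.1 l ∧ l.Sublist k.2.2)
    (t : Fin m) (k : ℕ) (hk : k < B) : ReflTransGen (Adj H) (.s t) (.r t k) := by
  obtain ⟨P, hP, -⟩ := x_path_of_R (x_mem_s (B := B) (n := n) t)
    (x_reach (x_mem_s t) ((x_mem_r t k).2 hk) (x_pos_lt_r (Or.inl ⟨t, rfl⟩)))
  obtain ⟨l, hl, -⟩ := hH (.s t, .r t k, P) ((hKspp _).2 ⟨by simp [hardK, hk], hP⟩)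
  obtain ⟨h1, -, h3, h4⟩ := hl
  match l, h3 with
  | a :: l, h3 =>
    simp at h3; subst h3
    have hc : List.IsChain (Adj H) (.s t :: l) := h1
    refine List.relationReflTransGen_of_exists_isChain_cons l hc ?_
    simpa [List.getLast?_eq_some_getLast] using h4

theorem x_bwd (hdist : Function.Injective n) (hpos : ∀ i, 0 < n i)
    (hsum : ∑ i, n i = m * B)
    (hbound : ∀ i, B < 4 * n i ∧ 2 * n i < B)
    (Kspp : Finset (Vtx m × Vtx m × List (Vtx m)))
    (hKspp : ∀ k : Vtx m × Vtx m × List (Vtx m),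
      k ∈ Kspp ↔ ((k.1, k.2.1) ∈ hardK m B n ∧
        DiPath (Adj (hardD m B n)) k.1 k.2.1 k.2.2))
    (H : Finset (Vtx m × Vtx m)) (hsol : SPPSolution (hardD m B n) Kspp 2 H) :
    ThreePartition m B n := by
  classical
  obtain ⟨hTC, hdeg, hH⟩ := hsol
  have h2 := x_two_le hdist hpos hbound
  have hE : ∀ u v, (u, v) ∈ H → u ∈ mainPath m B n ∧ XV m B n v := by
    intro u v huv
    obtain ⟨hne, hr⟩ := hTC _ huv
    simp only at hne hr
    constructor
    · rcases ReflTransGen.cases_head hr with h | ⟨c, hc, -⟩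
      · exact absurd h hne
      · exact (x_D_cases hpos hc).1
    · rcases ReflTransGen.cases_tail hr with h | ⟨c, -, hc⟩
      · exact absurd h.symm hne
      · exact (x_D_cases hpos hc).2.1
  have e_ss : ∀ t, (Vtx.s t, Vtx.s' t) ∈ H := fun t =>
    x_forced Kspp hKspp H hH (by simp) (by simp [hardK]) (x_D_main (x_D_ss t))
  have e_ww : ∀ i j, j + 1 < n i → (Vtx.w i j, Vtx.w i (j+1)) ∈ H := fun i j hj =>
    x_forced Kspp hKspp H hH (by simp) (by simp [hardK]; omega) (x_D_main (x_D_ww i j hj))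
  have e_wt : ∀ i, (Vtx.w i (n i - 1), Vtx.wt i) ∈ H := fun i =>
    x_forced Kspp hKspp H hH (by simp) (by simp [hardK]) (x_D_wt i)
  have e_rt : ∀ i j, j < B → (Vtx.r i j, Vtx.rt i j) ∈ H := fun i j hj =>
    x_forced Kspp hKspp H hH (by simp) (by simp [hardK, hj]) (x_D_rt i j hj)
  have e_rb : ∀ i j, j < B → (Vtx.r i j, Vtx.rb i j) ∈ H := fun i j hj =>
    x_forced Kspp hKspp H hH (by simp) (by simp [hardK, hj]) (x_D_rb i j hj)
  have r_r := x_reachH Kspp hKspp H hH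
  have r_wt : ∀ i d j, j + d + 1 = n i → ReflTransGen (Adj H) (.w i j) (.wt i) := by
    intro i d
    induction d with
    | zero =>
      intro j hj
      obtain rfl : j = n i - 1 := by omega
      exact ReflTransGen.single (e_wt i)
    | succ d ih =>
      intro j hj
      exact (ReflTransGen.single (e_ww i j (by omega))).trans (ih (j+1) (by omega))
  have r_wt : ∀ i j, j < n i → ReflTransGen (Adj H) (.w i j) (.wt i) := fun i j hj =>
    r_wt i (n i - 1 - j) j (by omega)
  have hback : ∀ t v, ReflTransGen (Adj H) (.s t) v → (∀ t, v ≠ .s t) →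
      ∃ u, (u, v) ∈ H ∧ ReflTransGen (Adj H) (.s t) u := by
    intro t v h hv
    rcases ReflTransGen.cases_tail h with h | ⟨c, hc, hcv⟩
    · exact absurd h (hv t)
    · exact ⟨c, hcv, hc⟩
  -- global count
  have hall : ∀ v, XV m B n v → ∃ t, ReflTransGen (Adj H) (.s t) v := by
    obtain ⟨c1, c2⟩ := x_cnt (B := B) (n := n) hdeg (fun u v h => (hE u v h).1)
      (fun v => ∃ t, ReflTransGen (Adj H) (.s t) v)
      (fun v _ ⟨t, ht⟩ hv => by
        obtain ⟨u, h1, h2⟩ := hback t v ht hv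
        exact ⟨u, h1, t, h2⟩)
    have c3 := ((Finset.card_le_card c1).trans Finset.card_image_le).trans c2
    rw [x_count1, x_count2] at c3
    set P : Vtx m → Prop := fun v => ∃ t, ReflTransGen (Adj H) (.s t) v with hPdef
    have p_s : ∀ t, P (.s t) := fun t => ⟨t, .refl⟩
    have p_s' : ∀ t, P (.s' t) := fun t => ⟨t, .single (e_ss t)⟩
    have p_r : ∀ t (k : Fin B), P (.r t k) := fun t k => ⟨t, r_r t k k.2⟩
    have p_rt : ∀ t (k : Fin B), P (.rt t k) := fun t k => ⟨t, (r_r t k k.2).tail (e_rt t k k.2)⟩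
    have p_rb : ∀ t (k : Fin B), P (.rb t k) := fun t k => ⟨t, (r_r t k k.2).tail (e_rb t k k.2)⟩
    have p_w : ∀ i j, j < n i → P (.w i j) → P (.wt i) := fun i j hj ⟨t, ht⟩ =>
      ⟨t, ht.trans (r_wt i j hj)⟩
    have hPe : ∀ v, (∃ t, ReflTransGen (Adj H) (.s t) v) ↔ P v := fun v => Iff.rfl
    simp only [hPe, p_s, p_s', p_r, p_rt, p_rb, if_true] at c3
    simp only [Finset.sum_const, Finset.card_univ, Fintype.card_fin, smul_eq_mul, mul_one] at c3
    rw [← hsum] at c3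
    have hle : ∀ i, (∑ j : Fin (n i), if P (.w i j) then 1 else 0) + 1 ≤
        n i + if P (.wt i) then 1 else 0 := by
      intro i
      by_cases hi : P (.wt i)
      · have : (∑ j : Fin (n i), if P (.w i j) then 1 else 0) ≤ ∑ j : Fin (n i), 1 :=
          Finset.sum_le_sum (fun j _ => by split <;> simp)
        simp at this
        simp only [hi, if_true, Finset.sum_boole] at this ⊢
        simpa using this
      · have : ∀ j : Fin (n i), ¬ P (.w i j) := fun j h => hi (p_w i j j.2 h)
        have h2i := h2 i
        simp only [hi, this, if_false, Finset.sum_const_zero]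
        omega
    have hsle : (∑ i, ((∑ j : Fin (n i), if P (.w i j) then 1 else 0) + 1)) =
        ∑ i, (n i + if P (.wt i) then 1 else 0) := by
      refine le_antisymm (Finset.sum_le_sum fun i _ => hle i) ?_
      rw [Finset.sum_add_distrib, Finset.sum_add_distrib]
      simp only [Finset.sum_const, Finset.card_univ, Fintype.card_fin, smul_eq_mul, mul_one]
      omega
    have heq := (Finset.sum_eq_sum_iff_of_le (fun i _ => hle i)).1 hsle
    have p_wt : ∀ i, P (.wt i) := by
      intro i
      by_contra hi
      have : ∀ j : Fin (n i), ¬ P (.w i j) := fun j h => hi (p_w i j j.2 h)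
      have h3 := heq i (Finset.mem_univ i)
      have h2i := h2 i
      simp only [hi, this, if_false, Finset.sum_const_zero] at h3
      omega
    have p_w' : ∀ i j, j < n i → P (.w i j) := by
      intro i j hj
      by_contra hc
      have h3 := heq i (Finset.mem_univ i)
      have : (∑ j : Fin (n i), if P (.w i j) then 1 else 0) < ∑ j : Fin (n i), 1 :=
        Finset.sum_lt_sum (fun j _ => by split <;> simp) ⟨⟨j, hj⟩, by simp, by simp [hc]⟩
      simp only [p_wt, if_true] at h3
      simp only [Finset.sum_const, Finset.card_univ, Fintype.card_fin, smul_eq_mul, mul_one] at this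
      omega
    intro v hv
    cases v with
    | s t => exact p_s t
    | s' t => exact p_s' t
    | w i j => exact p_w' i j hv
    | wt i => exact p_wt i
    | r t k => exact p_r t ⟨k, hv⟩
    | rt t k => exact p_rt t ⟨k, hv⟩
    | rb t k => exact p_rb t ⟨k, hv⟩
  -- uniqueness of in-edges
  have huniq : H.image Prod.snd = (XF m B n).filter (fun v => True ∧ ∀ t, v ≠ .s t) ∧
      (H.image Prod.snd).card = H.card := by
    obtain ⟨c1, c2⟩ := x_cnt (B := B) (n := n) hdeg (fun u v h => (hE u v h).1)
      (fun v => True)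
      (fun v hv _ hs => by
        obtain ⟨t, ht⟩ := hall v hv
        obtain ⟨u, h1, h2⟩ := hback t v ht hs
        exact ⟨u, h1, trivial⟩)
    simp only [Finset.filter_true] at c1 c2
    have k1 := x_count1 (m := m) (B := B) (n := n) (fun _ => True)
    have k2 := x_count2 (m := m) (B := B) (n := n) (fun _ => True)
    simp only [if_true, Finset.sum_const, Finset.card_univ, Fintype.card_fin, smul_eq_mul,
      mul_one, hsum] at k1 k2
    have c3 : (H.image Prod.snd).card ≤ H.card := Finset.card_image_le
    have c4 := Finset.card_le_card c1
    refine ⟨(Finset.eq_of_subset_of_card_le c1 (by omega)).symm, by omega⟩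
  obtain ⟨u1, u2⟩ := huniq
  have hinj := Finset.card_image_iff.1 u2
  have hnos : ∀ u t, (u, Vtx.s t) ∉ H := by
    intro u t h
    have : Vtx.s t ∈ H.image Prod.snd := Finset.mem_image.2 ⟨_, h, rfl⟩
    rw [u1, Finset.mem_filter] at this
    exact this.2.2 t rfl
  have hdisj : ∀ t v, ReflTransGen (Adj H) (.s t) v → ∀ t', ReflTransGen (Adj H) (.s t') v →
      t' = t := by
    intro t v h
    induction h with
    | refl =>
      intro t' h
      rcases ReflTransGen.cases_tail h with h | ⟨c, -, hc⟩
      · simpa using h.symm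
      · exact absurd hc (hnos _ _)
    | tail hab hbc ih =>
      rename_i b c
      intro t' h
      rcases ReflTransGen.cases_tail h with h | ⟨d, hd, hdc⟩
      · subst h; exact absurd hbc (hnos _ _)
      · have : (d, c) = (b, c) := hinj (Finset.mem_coe.2 hdc) (Finset.mem_coe.2 hbc) rfl
        simp only [Prod.mk.injEq, and_true] at this
        subst this
        exact ih t' hd
  -- root assignment
  choose f hf using fun i => hall (.wt i) trivial
  have hwf : ∀ t i j, j < n i → (ReflTransGen (Adj H) (.s t) (.w i j) ↔ f i = t) := by
    intro t i j hj
    constructor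
    · intro h
      exact (hdisj _ _ (h.trans (r_wt i j hj)) _ (hf i))
    · rintro rfl
      obtain ⟨t', ht'⟩ := hall (.w i j) hj
      obtain rfl := (hdisj _ _ (ht'.trans (r_wt i j hj)) _ (hf i))
      exact ht'
  have hineq : ∀ t, B + (Finset.univ.filter fun i => f i = t).card ≤
      3 + ∑ i ∈ Finset.univ.filter (fun i => f i = t), n i := by
    intro t
    obtain ⟨c1, c2⟩ := x_cnt (B := B) (n := n) hdeg (fun u v h => (hE u v h).1)
      (fun v => ReflTransGen (Adj H) (.s t) v) (fun v _ h hv => hback t v h hv)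
    have c3 := ((Finset.card_le_card c1).trans Finset.card_image_le).trans c2
    rw [x_count1, x_count2] at c3
    have q : ∀ t' v, ReflTransGen (Adj H) (.s t') v → (ReflTransGen (Adj H) (.s t) v ↔ t = t') :=
      fun t' v h => ⟨fun h' => hdisj _ _ h _ h', fun h' => h' ▸ h⟩
    have q_s : ∀ t', ReflTransGen (Adj H) (.s t) (.s t') ↔ t = t' := fun t' => q _ _ .refl
    have q_s' : ∀ t', ReflTransGen (Adj H) (.s t) (.s' t') ↔ t = t' :=
      fun t' => q _ _ (.single (e_ss t'))
    have q_r : ∀ t' (k : Fin B), ReflTransGen (Adj H) (.s t) (.r t' k) ↔ t = t' :=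
      fun t' k => q _ _ (r_r t' k k.2)
    have q_rt : ∀ t' (k : Fin B), ReflTransGen (Adj H) (.s t) (.rt t' k) ↔ t = t' :=
      fun t' k => q _ _ ((r_r t' k k.2).tail (e_rt t' k k.2))
    have q_rb : ∀ t' (k : Fin B), ReflTransGen (Adj H) (.s t) (.rb t' k) ↔ t = t' :=
      fun t' k => q _ _ ((r_r t' k k.2).tail (e_rb t' k k.2))
    have q_wt : ∀ i, ReflTransGen (Adj H) (.s t) (.wt i) ↔ f i = t :=
      fun i => (q _ _ (hf i)).trans eq_comm
    have q_w : ∀ i (j : Fin (n i)), ReflTransGen (Adj H) (.s t) (.w i j) ↔ f i = t :=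
      fun i j => hwf t i j j.2
    simp only [q_s, q_s', q_r, q_rt, q_rb, q_wt, q_w, Finset.sum_const, Finset.card_univ,
      Fintype.card_fin, smul_eq_mul, mul_ite, mul_one, mul_zero, Finset.sum_ite_eq,
      Finset.mem_univ, if_true] at c3
    rw [← Finset.sum_filter, ← Finset.sum_filter, ← Finset.card_eq_sum_ones] at c3
    omega
  have heq : ∀ t, B + (Finset.univ.filter fun i => f i = t).card =
      3 + ∑ i ∈ Finset.univ.filter (fun i => f i = t), n i := by
    have hs : ∑ t : Fin m, (B + (Finset.univ.filter fun i => f i = t).card) =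
        ∑ t : Fin m, (3 + ∑ i ∈ Finset.univ.filter (fun i => f i = t), n i) := by
      rw [Finset.sum_add_distrib, Finset.sum_add_distrib,
        Finset.sum_fiberwise, ← Finset.card_eq_sum_card_fiberwise (fun i _ => Finset.mem_univ _)]
      simp only [Finset.sum_const, Finset.card_univ, Fintype.card_fin, smul_eq_mul, hsum]
      ring
    intro t
    exact (Finset.sum_eq_sum_iff_of_le (fun t _ => hineq t)).1 hs t (Finset.mem_univ t)
  exact ⟨f, fun t => x_arith hdist h2 hbound (by have := t.2; omega) _ (heq t)⟩

end
/-- For pairwise distinct positive integers `n_1, …, n_{3m}`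
with `∑ n_i = m·B` and `B/4 < n_i < B/2`, consider the MD-SPP instance obtained
from the construction by routing each commodity pair in `hardK` along the
unique directed path in `hardD` from its source to its destination (so `Kspp`
consists exactly of the triples `(s,t,P)` with `(s,t) ∈ hardK` and `P` a
directed `s`-`t`-path in `hardD`). Then the 3-Partition instance is solvable
iff this MD-SPP instance with target `2` is a YES-instance. -/
theorem threePartition_iff_mdspp (m B : ℕ) (n : Fin (3 * m) → ℕ)
    (hdist : Function.Injective n) (hpos : ∀ i, 0 < n i)
    (hsum : ∑ i, n i = m * B)
    (hbound : ∀ i, B < 4 * n i ∧ 2 * n i < B)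
    (Kspp : Finset (Vtx m × Vtx m × List (Vtx m)))
    (hKspp : ∀ k : Vtx m × Vtx m × List (Vtx m),
      k ∈ Kspp ↔ ((k.1, k.2.1) ∈ hardK m B n ∧
        DiPath (Adj (hardD m B n)) k.1 k.2.1 k.2.2)) :
    ThreePartition m B n ↔
      ∃ H : Finset (Vtx m × Vtx m), SPPSolution (hardD m B n) Kspp 2 H := by
  constructor
  · exact x_fwd hpos Kspp hKspp
  · rintro ⟨H, hH⟩
    exact x_bwd hdist hpos hsum hbound Kspp hKspp H hH
end
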